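/- arXiv:math/0404411 — 4 statements merged into one kernel-verified Lean document; each statement's English description precedes it below -/
import Mathlib

section
/- (Dickson's theorem) The Dickson invariants d_{n,0}, …, d_{n,n-1} are algebraically independent over 𝔽_p, and the subalgebra of GL_n(𝔽_p)-invariants of S = MvPolynomial (Fin n) 𝔽_p equals the 𝔽_p-subalgebra generated by d_{n,0}, …, d_{n,n-1}; in other words, S^{GL_n(𝔽_p)} = 𝔽_p[d_{n,0}, …, d_{n,n-1}] is a polynomial algebra on the Dickson invariants. -/
open MvPolynomial

/-- `V p n k` : the set of `𝔽_p`-linear combinations of the first `k` variables. -/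
noncomputable def V (p n k : ℕ) [Fact p.Prime] : Finset (MvPolynomial (Fin n) (ZMod p)) :=
  (Finset.univ : Finset (Fin n → ZMod p)).image
    (fun c => ∑ j ∈ Finset.univ.filter (fun j : Fin n => j.val < k), C (c j) * X j)

/-- `f p n k = ∏_{u ∈ V_k} (X - C u)`. -/
noncomputable def f (p n k : ℕ) [Fact p.Prime] :
    Polynomial (MvPolynomial (Fin n) (ZMod p)) :=
  ∏ u ∈ V p n k, (Polynomial.X - Polynomial.C u)

/-- Dickson invariant `d_{k,i}`. -/
noncomputable def d (p n k i : ℕ) [Fact p.Prime] : MvPolynomial (Fin n) (ZMod p) :=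
  (-1) ^ (k - i) * (f p n k).coeff (p ^ i)

/-- Borel generator: `hGen p n j` is `h_{j+1}` of the paper. -/
noncomputable def hGen (p n : ℕ) [Fact p.Prime] (j : Fin n) : MvPolynomial (Fin n) (ZMod p) :=
  (Polynomial.eval (X j) (f p n j.val)) ^ (p - 1)

/-- Action of `GL_n(𝔽_p)` on `S` by linear substitution `g · y_j = ∑_i g_{ij} y_i`. -/
noncomputable def gact (p n : ℕ) [Fact p.Prime] (g : GL (Fin n) (ZMod p)) :
    MvPolynomial (Fin n) (ZMod p) →ₐ[ZMod p] MvPolynomial (Fin n) (ZMod p) :=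
  aeval (fun j : Fin n => ∑ i : Fin n, C ((g : Matrix (Fin n) (Fin n) (ZMod p)) i j) * X i)

namespace DicksonAux

/-- The product of `X - u` over all formal `𝔽_p`-combinations `u` of `y`. -/
noncomputable def P (p : ℕ) [Fact p.Prime] {k : ℕ} {R : Type*} [CommRing R] [Algebra (ZMod p) R]
    (y : Fin k → R) : Polynomial R :=
  ∏ c : Fin k → ZMod p, (Polynomial.X - Polynomial.C (∑ j, c j • y j))

/-- Linearized polynomials. -/
noncomputable def Lin (p : ℕ) (L : Type*) [Field L] : Submodule L (Polynomial L) :=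
  Submodule.span L (Set.range fun i : ℕ => (Polynomial.X : Polynomial L) ^ (p ^ i))

section
variable {p : ℕ} [Fact p.Prime] {L : Type*} [Field L] [Algebra (ZMod p) L]

lemma charP_L : CharP L p := charP_of_injective_algebraMap (algebraMap (ZMod p) L).injective p

lemma lin_pow {q : Polynomial L} (hq : q ∈ Lin p L) : q ^ p ∈ Lin p L := by
  have : CharP L p := charP_L
  induction hq using Submodule.span_induction with
  | mem x hx =>
    obtain ⟨i, rfl⟩ := hx
    refine Submodule.subset_span ⟨i + 1, ?_⟩
    simp only [← pow_mul, pow_succ]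
  | zero => rw [zero_pow (Fact.out : p.Prime).ne_zero]; exact Submodule.zero_mem _
  | add x y _ _ hx hy => rw [add_pow_char]; exact Submodule.add_mem _ hx hy
  | smul a x _ hx => rw [smul_pow]; exact Submodule.smul_mem _ _ hx

lemma lin_comp {q : Polynomial L} (hq : q ∈ Lin p L) (z : L) :
    q.comp (Polynomial.X - Polynomial.C z) = q - Polynomial.C (q.eval z) := by
  have : CharP L p := charP_L
  induction hq using Submodule.span_induction with
  | mem x hx =>
    obtain ⟨i, rfl⟩ := hx
    simp only [Polynomial.X_pow_comp, Polynomial.eval_pow, Polynomial.eval_X, map_pow]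
    rw [sub_pow_char_pow]
  | zero => simp
  | add x y _ _ hx hy => simp only [Polynomial.add_comp, hx, hy, Polynomial.eval_add, map_add]; ring
  | smul a x _ hx =>
    rw [Polynomial.smul_comp, hx, Polynomial.eval_smul, smul_eq_mul, map_mul,
      Polynomial.smul_eq_C_mul, Polynomial.smul_eq_C_mul]; ring

lemma lin_smul_eval {q : Polynomial L} (hq : q ∈ Lin p L) (c : ZMod p) (z : L) :
    q.eval (c • z) = c • q.eval z := by
  induction hq using Submodule.span_induction with
  | mem x hx =>
    obtain ⟨i, rfl⟩ := hx
    simp [smul_pow, ZMod.pow_card_pow]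
  | zero => simp
  | add x y _ _ hx hy => simp only [hx, hy, Polynomial.eval_add, smul_add]
  | smul a x _ hx => simp only [hx, Polynomial.eval_smul, smul_comm a c]

lemma lin_coeff {q : Polynomial L} (hq : q ∈ Lin p L) (m : ℕ) (hm : ∀ i, m ≠ p ^ i) :
    q.coeff m = 0 := by
  induction hq using Submodule.span_induction with
  | mem x hx =>
    obtain ⟨i, rfl⟩ := hx
    simp [Polynomial.coeff_X_pow, hm i]
  | zero => simp
  | add x y _ _ hx hy => simp [hx, hy]
  | smul a x _ hx => simp [hx]

lemma prod_fp : ∏ c : ZMod p, (Polynomial.X - Polynomial.C c) = Polynomial.X ^ p - Polynomial.X := by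
  have hp : 1 < p := (Fact.out : p.Prime).one_lt
  have h := FiniteField.roots_X_pow_card_sub_X (ZMod p)
  rw [ZMod.card] at h
  have hd := FiniteField.X_pow_card_sub_X_natDegree_eq (ZMod p) hp
  have hm : (Polynomial.X ^ p - Polynomial.X : Polynomial (ZMod p)).Monic := by
    apply Polynomial.monic_X_pow_sub
    rw [Polynomial.degree_X]; exact_mod_cast hp
  have := Polynomial.prod_multiset_X_sub_C_of_monic_of_roots_card_eq hm (by rw [h, hd]; simp [ZMod.card])
  rw [h] at this
  exact this

lemma prod_fp' (T : Polynomial L) (z : L) :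
    ∃ w : L, ∏ c : ZMod p, (T - Polynomial.C (c • z)) = T ^ p + w • T := by
  have hp : 1 < p := (Fact.out : p.Prime).one_lt
  by_cases hz : z = 0
  · exact ⟨0, by simp [hz, ZMod.card]⟩
  refine ⟨- z ^ (p - 1), ?_⟩
  have h := congrArg (Polynomial.aeval (Polynomial.C z⁻¹ * T)) (prod_fp (p := p))
  simp only [map_prod, map_sub, map_pow, Polynomial.aeval_X, Polynomial.aeval_C] at h
  have hC : Polynomial.C z * Polynomial.C z⁻¹ = (1 : Polynomial L) := by
    rw [← map_mul, mul_inv_cancel₀ hz, map_one]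
  have h1 : ∀ c : ZMod p, T - Polynomial.C (c • z) = Polynomial.C z *
      (Polynomial.C z⁻¹ * T - algebraMap (ZMod p) (Polynomial L) c) := by
    intro c
    rw [mul_sub, ← mul_assoc, hC, one_mul, Algebra.smul_def, map_mul, mul_comm]
    rfl
  rw [Finset.prod_congr rfl (fun c _ => h1 c), Finset.prod_mul_distrib, h, Finset.prod_const,
    Finset.card_univ, ZMod.card, mul_pow, mul_sub, ← mul_assoc, ← mul_pow, hC, one_pow, one_mul,
    Polynomial.smul_eq_C_mul]
  obtain ⟨m, rfl⟩ : ∃ m, p = m + 1 := ⟨p - 1, by omega⟩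
  rw [pow_succ, Nat.add_sub_cancel, map_neg, map_pow]
  linear_combination (-(Polynomial.C z) ^ m * T) * hC

lemma P_lin : ∀ {k : ℕ} (y : Fin k → L), P p y ∈ Lin p L := by
  intro k
  induction k with
  | zero =>
    intro y
    refine Submodule.subset_span ⟨0, ?_⟩
    simp [P]
  | succ k ih =>
    intro y
    have h := ih (fun j => y j.succ)
    set q := P p (fun j => y j.succ) with hq
    have key : P p y = ∏ c : ZMod p, (q - Polynomial.C (c • q.eval (y 0))) := by
      rw [P, ← (Fin.consEquiv (fun _ => ZMod p)).prod_comp, Fintype.prod_prod_type]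
      refine Finset.prod_congr rfl fun c _ => ?_
      rw [← lin_smul_eval h, ← lin_comp h, hq, P, Polynomial.prod_comp]
      refine Finset.prod_congr rfl fun c' _ => ?_
      simp only [Fin.consEquiv_apply, Fin.sum_univ_succ, Fin.cons_zero, Fin.cons_succ,
        Polynomial.sub_comp, Polynomial.X_comp, Polynomial.C_comp, map_add]
      ring
    obtain ⟨w, hw⟩ := prod_fp' (p := p) q (q.eval (y 0))
    rw [key, hw]
    exact Submodule.add_mem _ (lin_pow h) (Submodule.smul_mem _ _ h)

end

section
variable {p : ℕ} [Fact p.Prime] {R : Type*} [CommRing R] [Algebra (ZMod p) R]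

lemma P_map {T : Type*} [CommRing T] [Algebra (ZMod p) T] (φ : R →ₐ[ZMod p] T) {k : ℕ}
    (y : Fin k → R) : (P p y).map (φ : R →+* T) = P p (fun j => φ (y j)) := by
  rw [P, P, Polynomial.map_prod]
  refine Finset.prod_congr rfl fun c _ => ?_
  rw [Polynomial.map_sub, Polynomial.map_X, Polynomial.map_C]
  congr 2
  simp

lemma P_monic {k : ℕ} (y : Fin k → R) : (P p y).Monic :=
  Polynomial.monic_prod_of_monic _ _ fun _ _ => Polynomial.monic_X_sub_C _

lemma P_natDegree [Nontrivial R] {k : ℕ} (y : Fin k → R) : (P p y).natDegree = p ^ k := by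
  rw [P, Polynomial.natDegree_prod_of_monic _ _ fun _ _ => Polynomial.monic_X_sub_C _]
  rw [Finset.sum_congr rfl fun _ _ => Polynomial.natDegree_X_sub_C _]
  simp [ZMod.card]

end

variable {p n : ℕ} [Fact p.Prime]

lemma comb_inj {c c' : Fin n → ZMod p}
    (h : ∑ j, c j • (X j : MvPolynomial (Fin n) (ZMod p)) = ∑ j, c' j • X j) : c = c' := by
  have := congrArg (fun q => fun i : Fin n => coeff (Finsupp.single i 1) q) h
  funext i
  have := congrFun this i
  simpa [coeff_sum, coeff_X, Finsupp.single_left_inj] using this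

lemma f_eq : f p n n = P p (fun j : Fin n => (X j : MvPolynomial (Fin n) (ZMod p))) := by
  classical
  rw [f, V, P, Finset.prod_image]
  · refine Finset.prod_congr rfl fun c _ => ?_
    simp [smul_eq_C_mul]
  · intro c _ c' _ h
    apply comb_inj
    simpa [smul_eq_C_mul] using h

lemma f_coeff (m : ℕ) : (f p n n).coeff m ∈
    Algebra.adjoin (ZMod p) (Set.range (fun i : Fin n => d p n n i.val)) := by
  have hm : (f p n n).Monic := by rw [f_eq]; exact P_monic _
  have hd : (f p n n).natDegree = p ^ n := by rw [f_eq]; exact P_natDegree _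
  have hp : 1 < p := (Fact.out : p.Prime).one_lt
  by_cases h : ∃ i, m = p ^ i
  · obtain ⟨i, rfl⟩ := h
    rcases lt_trichotomy i n with hi | rfl | hi
    · have h1 : (f p n n).coeff (p ^ i) = (-1) ^ (n - i) * d p n n i := by
        rw [d, ← mul_assoc, ← mul_pow]; simp
      rw [h1]
      refine Subalgebra.mul_mem _ (Subalgebra.pow_mem _ (Subalgebra.neg_mem _ (Subalgebra.one_mem _)) _)
        (Algebra.subset_adjoin ⟨⟨i, hi⟩, rfl⟩)
    · rw [← hd, hm.coeff_natDegree]; exact Subalgebra.one_mem _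
    · rw [Polynomial.coeff_eq_zero_of_natDegree_lt]
      · exact Subalgebra.zero_mem _
      · rw [hd]; exact Nat.pow_lt_pow_right hp hi
  · push Not at h
    have : (f p n n).coeff m = 0 := by
      apply IsFractionRing.injective (MvPolynomial (Fin n) (ZMod p))
        (FractionRing (MvPolynomial (Fin n) (ZMod p)))
      have h2 := P_map (p := p) (IsScalarTower.toAlgHom (ZMod p) (MvPolynomial (Fin n) (ZMod p))
        (FractionRing (MvPolynomial (Fin n) (ZMod p)))) (fun j : Fin n => X j)
      rw [← f_eq] at h2
      have h3 := lin_coeff (P_lin (p := p) (fun j : Fin n => IsScalarTower.toAlgHom (ZMod p)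
        (MvPolynomial (Fin n) (ZMod p)) (FractionRing (MvPolynomial (Fin n) (ZMod p))) (X j))) m h
      rw [← h2, Polynomial.coeff_map] at h3
      rw [map_zero]
      exact h3
    rw [this]; exact Subalgebra.zero_mem _

lemma f_eval (j : Fin n) : (f p n n).eval (X j) = 0 := by
  rw [f_eq, P, Polynomial.eval_prod]
  apply Finset.prod_eq_zero (Finset.mem_univ (Pi.single j 1))
  simp [Pi.single_apply]

lemma gact_d (g : GL (Fin n) (ZMod p)) (i : ℕ) : gact p n g (d p n n i) = d p n n i := by
  have h : (f p n n).map ((gact p n g : _ →ₐ[ZMod p] _) : _ →+* MvPolynomial (Fin n) (ZMod p))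
      = f p n n := by
    rw [f_eq, P_map, P, P]
    let e : (Fin n → ZMod p) ≃ (Fin n → ZMod p) :=
      { toFun := fun c => (g : Matrix (Fin n) (Fin n) (ZMod p)).mulVec c
        invFun := fun c => ((g⁻¹ : GL (Fin n) (ZMod p)) : Matrix (Fin n) (Fin n) (ZMod p)).mulVec c
        left_inv := fun c => by
          dsimp only
          rw [Matrix.mulVec_mulVec, ← Units.val_mul]; simp
        right_inv := fun c => by
          dsimp only
          rw [Matrix.mulVec_mulVec, ← Units.val_mul]; simp }
    refine Fintype.prod_equiv e _ _ fun c => ?_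
    congr 2
    simp only [gact, aeval_X, e, Equiv.coe_fn_mk, Matrix.mulVec, dotProduct, Finset.smul_sum,
      Finset.sum_smul, smul_eq_C_mul, map_mul]
    rw [Finset.sum_comm]
    refine Finset.sum_congr rfl fun a _ => Finset.sum_congr rfl fun b _ => ?_
    ring
  have h2 : gact p n g ((f p n n).coeff (p ^ i)) = (f p n n).coeff (p ^ i) := by
    conv_rhs => rw [← h, Polynomial.coeff_map]
    rfl
  rw [d, map_mul, map_pow, map_neg, map_one, h2]

lemma integral (x : MvPolynomial (Fin n) (ZMod p)) :
    IsIntegral (Algebra.adjoin (ZMod p) (Set.range (fun i : Fin n => d p n n i.val))) x := by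
  set A := Algebra.adjoin (ZMod p) (Set.range (fun i : Fin n => d p n n i.val)) with hA
  obtain ⟨q, hq⟩ : ∃ q : Polynomial A, q.map (algebraMap A _) = f p n n := by
    have : f p n n ∈ Polynomial.lifts (algebraMap A (MvPolynomial (Fin n) (ZMod p))) := by
      rw [Polynomial.lifts_iff_coeff_lifts]
      intro m
      exact ⟨⟨_, f_coeff m⟩, rfl⟩
    simpa [Polynomial.mem_lifts] using this
  have hqm : q.Monic := by
    apply Polynomial.monic_of_injective (f := algebraMap A (MvPolynomial (Fin n) (ZMod p)))
    · exact Subtype.val_injective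
    · rw [hq, f_eq]; exact P_monic _
  have hX : ∀ j, IsIntegral A (X j : MvPolynomial (Fin n) (ZMod p)) := fun j =>
    ⟨q, hqm, by rw [← Polynomial.eval_map, hq, f_eval]⟩
  induction x using MvPolynomial.induction_on with
  | C a => exact (isIntegral_algebraMap (R := A) (x := algebraMap (ZMod p) A a))
  | add x y hx hy => exact hx.add hy
  | mul_X x j hx => exact hx.mul (hX j)

lemma algInd : AlgebraicIndependent (ZMod p) (fun i : Fin n => d p n n i.val) := by
  have : Algebra.IsAlgebraic (Algebra.adjoin (ZMod p)
    (Set.range (fun i : Fin n => d p n n i.val))) (MvPolynomial (Fin n) (ZMod p)) :=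
    ⟨fun x => (integral x).isAlgebraic⟩
  refine (Algebra.IsAlgebraic.isTranscendenceBasis_of_le_trdeg_of_finite (ZMod p)
    (fun i : Fin n => d p n n i.val) ?_).1
  rw [MvPolynomial.trdeg_of_isDomain]
  simp

end DicksonAux

namespace DicksonAux
variable {p n : ℕ} [Fact p.Prime]
open IntermediateField.algebraAdjoinAdjoin

lemma mem_of_fixed (x : MvPolynomial (Fin n) (ZMod p)) (hx : ∀ g, gact p n g x = x) :
    x ∈ Algebra.adjoin (ZMod p) (Set.range (fun i : Fin n => d p n n i.val)) := by
  let S := MvPolynomial (Fin n) (ZMod p)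
  let L := FractionRing S
  let ι : S →ₐ[ZMod p] L := IsScalarTower.toAlgHom (ZMod p) S L
  have hι : Function.Injective ι := IsFractionRing.injective S L
  let D : Set L := Set.range (fun i : Fin n => ι (d p n n i.val))
  let A := Algebra.adjoin (ZMod p) D
  let F := IntermediateField.adjoin (ZMod p) D
  have hAmap : A = (Algebra.adjoin (ZMod p) (Set.range (fun i : Fin n => d p n n i.val))).map ι := by
    rw [AlgHom.map_adjoin, ← Set.range_comp]; rfl
  have hAF : ∀ a ∈ A, a ∈ F := fun a ha => IntermediateField.algebra_adjoin_le_adjoin _ _ ha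
  -- the polynomial over F
  obtain ⟨q, hq⟩ : ∃ q : Polynomial F, q.map (algebraMap F L) = P p (fun j => ι (X j)) := by
    have : P p (fun j => ι (X j)) ∈ Polynomial.lifts (algebraMap F L) := by
      rw [Polynomial.lifts_iff_coeff_lifts]
      intro m
      rw [← P_map, ← f_eq, Polynomial.coeff_map]
      refine ⟨⟨_, hAF (ι ((f p n n).coeff m)) ?_⟩, rfl⟩
      rw [hAmap]
      exact ⟨_, f_coeff m, rfl⟩
    simpa [Polynomial.mem_lifts] using this
  have hroot : ∀ z : L, Polynomial.aeval z q = 0 ↔ ∃ c : Fin n → ZMod p, z = ∑ j, c j • ι (X j) := by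
    intro z
    rw [Polynomial.aeval_def, ← Polynomial.eval_map, hq, P, Polynomial.eval_prod,
      Finset.prod_eq_zero_iff]
    simp only [Finset.mem_univ, true_and, Polynomial.eval_sub, Polynomial.eval_X,
      Polynomial.eval_C, sub_eq_zero]
  have hinj : ∀ c c' : Fin n → ZMod p, ∑ j, c j • ι (X j) = ∑ j, c' j • ι (X j) → c = c' := by
    intro c c' h
    apply comb_inj
    apply hι
    simpa only [map_sum, map_smul] using h
  have hXroot : ∀ j, Polynomial.aeval (ι (X j)) q = 0 := fun j => by
    rw [hroot]
    exact ⟨Pi.single j 1, by simp [Pi.single_apply]⟩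
  have hq0 : q ≠ 0 := by
    rintro rfl
    exact (P_monic (p := p) (fun j : Fin n => ι (X j))).ne_zero (by rw [← hq, Polynomial.map_zero])
  have hsep : q.Separable := by
    rw [← Polynomial.separable_map (algebraMap F L), hq, P]
    apply Polynomial.separable_prod
    · intro c c' hcc
      refine Polynomial.isCoprime_X_sub_C_of_isUnit_sub ?_
      rw [isUnit_iff_ne_zero, sub_ne_zero]
      exact fun h => hcc (hinj _ _ h)
    · intro c
      exact Polynomial.separable_X_sub_C
  have hsplit : q.IsSplittingField F L := by
    rw [isSplittingField_iff_intermediateField]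
    constructor
    · rw [hq, P]
      exact Polynomial.Splits.prod fun _ _ => Polynomial.Splits.X_sub_C _
    · rw [eq_top_iff]
      rintro z -
      have hS : ∀ s : S, ι s ∈ IntermediateField.adjoin F (q.rootSet L) := by
        intro s
        induction s using MvPolynomial.induction_on with
        | C a =>
          have : ι (C a) = algebraMap F L (algebraMap (ZMod p) F a) := ι.commutes a
          rw [this]
          exact IntermediateField.algebraMap_mem _ _
        | add a b ha hb => rw [map_add]; exact add_mem ha hb
        | mul_X a j ha =>
          rw [map_mul]
          refine mul_mem ha (IntermediateField.subset_adjoin _ _ ?_)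
          rw [Polynomial.mem_rootSet', hq]
          exact ⟨(P_monic _).ne_zero, hXroot j⟩
      obtain ⟨a, b, _, rfl⟩ := IsFractionRing.div_surjective (A := S) z
      exact div_mem (hS a) (hS b)
  have hgal : IsGalois F L := IsGalois.of_separable_splitting_field hsep
  have hfd : FiniteDimensional F L := Polynomial.IsSplittingField.finiteDimensional L q
  have hfix : ι x ∈ (⊥ : IntermediateField F L) := by
    rw [IsGalois.mem_bot_iff_fixed]
    intro σ
    have hmat : ∀ τ : L ≃ₐ[F] L, ∃ M : Matrix (Fin n) (Fin n) (ZMod p),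
        ∀ j, τ (ι (X j)) = ∑ i, M i j • ι (X i) := by
      intro τ
      have : ∀ j, ∃ c : Fin n → ZMod p, τ (ι (X j)) = ∑ i, c i • ι (X i) := by
        intro j
        rw [← hroot, Polynomial.aeval_algHom_apply, hXroot, map_zero]
      choose c hc using this
      exact ⟨fun i j => c j i, hc⟩
    have hsm : ∀ (τ : L ≃ₐ[F] L) (c : ZMod p) (z : L), τ (c • z) = c • τ z := by
      intro τ c z
      exact map_smul (τ.restrictScalars (ZMod p)) c z
    have hmul : ∀ (τ ρ : L ≃ₐ[F] L) (M N : Matrix (Fin n) (Fin n) (ZMod p)),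
        (∀ j, τ (ι (X j)) = ∑ i, M i j • ι (X i)) → (∀ j, ρ (ι (X j)) = ∑ i, N i j • ι (X i)) →
        (∀ z, τ (ρ z) = z) → M * N = 1 := by
      intro τ ρ M N hM hN h
      have : ∀ j, (fun i => (M * N) i j) = Pi.single j 1 := by
        intro j
        apply hinj
        have h1 := h (ι (X j))
        rw [hN, map_sum] at h1
        simp only [hsm, hM, Finset.smul_sum] at h1
        rw [Finset.sum_comm] at h1
        simp only [Matrix.mul_apply, Finset.sum_smul]
        have h2 : ∑ i, (Pi.single j 1 : Fin n → ZMod p) i • ι (X i) = ι (X j) := by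
          simp [Pi.single_apply]
        rw [h2, ← h1]
        refine Finset.sum_congr rfl fun a _ => Finset.sum_congr rfl fun b _ => ?_
        rw [smul_smul, mul_comm]
      ext i j
      rw [congrFun (this j) i, Matrix.one_apply, Pi.single_apply]
    obtain ⟨M, hM⟩ := hmat σ
    obtain ⟨N, hN⟩ := hmat σ.symm
    have hMN := hmul σ σ.symm M N hM hN (fun z => σ.apply_symm_apply z)
    have hNM := hmul σ.symm σ N M hN hM (fun z => σ.symm_apply_apply z)
    let g : GL (Fin n) (ZMod p) := ⟨M, N, hMN, hNM⟩
    have hcomp : (σ.restrictScalars (ZMod p)).toAlgHom.comp ι = ι.comp (gact p n g) := by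
      apply MvPolynomial.algHom_ext
      intro j
      have : gact p n g (X j) = ∑ i, M i j • X i := by
        simp [gact, smul_eq_C_mul, g]
      rw [AlgHom.comp_apply, AlgHom.comp_apply, this, map_sum]
      simp only [map_smul]
      exact hM j
    have := congrArg (fun φ => φ x) hcomp
    simp only [AlgHom.comp_apply, hx g] at this
    exact this
  obtain ⟨y, hy⟩ := IntermediateField.mem_bot.mp hfix
  -- integrality
  have hind : AlgebraicIndependent (ZMod p) (fun i : Fin n => ι (d p n n i.val)) :=
    algInd.map' hι
  have hic : IsIntegrallyClosed A := IsIntegrallyClosed.of_equiv hind.aevalEquiv.toRingEquiv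
  have hyint : IsIntegral A y := by
    have h1 : IsIntegral A (ι x) := by
      obtain ⟨r, hr, hr0⟩ := integral x
      let φ : Algebra.adjoin (ZMod p) (Set.range (fun i : Fin n => d p n n i.val)) →+* A :=
        ((ι.comp (Subalgebra.val _)).codRestrict A (fun a => by
          rw [hAmap]; exact ⟨a, a.2, rfl⟩) : _ →ₐ[ZMod p] A)
      refine ⟨r.map φ, hr.map φ, ?_⟩
      rw [Polynomial.eval₂_map]
      have h2 : (algebraMap A L).comp φ = (ι : S →+* L).comp (algebraMap _ S) := rfl
      rw [h2]
      have h3 := congrArg ι hr0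
      rw [map_zero] at h3
      rw [← h3]
      exact (Polynomial.hom_eval₂ r _ (ι : S →+* L) x).symm
    rw [← hy] at h1
    exact (isIntegral_algebraMap_iff (algebraMap F L).injective).mp h1
  obtain ⟨a, ha⟩ := (isIntegrallyClosed_iff F).mp hic hyint
  have hxa : ι x ∈ A := by
    rw [← hy, ← ha]; exact a.2
  rw [hAmap] at hxa
  obtain ⟨b, hb, hbx⟩ := hxa
  rw [← hι hbx]
  exact hb

end DicksonAux

/-- Dickson's theorem: the Dickson invariants are algebraically independent and
generate the algebra of `GL_n(𝔽_p)`-invariants. -/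
theorem stmt4 (p n : ℕ) [Fact p.Prime] :
    AlgebraicIndependent (ZMod p) (fun i : Fin n => d p n n i.val) ∧
    ∀ x : MvPolynomial (Fin n) (ZMod p),
      (∀ g : GL (Fin n) (ZMod p), gact p n g x = x) ↔
        x ∈ Algebra.adjoin (ZMod p) (Set.range (fun i : Fin n => d p n n i.val)) := by
  refine ⟨DicksonAux.algInd, fun x => ⟨DicksonAux.mem_of_fixed x, fun hx g => ?_⟩⟩
  induction hx using Algebra.adjoin_induction with
  | mem x hx =>
    obtain ⟨i, rfl⟩ := hx
    exact DicksonAux.gact_d g i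
  | algebraMap r => exact (gact p n g).commutes r
  | add x y _ _ hx hy => rw [map_add, hx, hy]
  | mul x y _ _ hx hy => rw [map_mul, hx, hy]
end

section
/- Let 0 ≤ s < k and 1 ≤ t with k + t ≤ n. Suppose P, Q ∈ MvPolynomial (Fin n) 𝔽_p satisfy aeval(h) P = d_{k+t,s} and aeval(h) Q = d_{k,s} · d_{k+t,k}, where aeval(h) substitutes h_1, …, h_n for the n variables. Then: (i) the support of P is contained in the support of Q (every monomial of d_{k+t,s}, written in the h's, is also a monomial of d_{k,s} · d_{k+t,k}); and (ii) no exponent vector in the support of Q - P has all of its coordinates at the positions corresponding to h_{k+1}, …, h_{k+t} nonzero, i.e. no monomial of Q - P is divisible by the product of the variables sent to h_{k+1} ⋯ h_{k+t}. -/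
open MvPolynomial

/-- Formal Dickson recursion. -/
noncomputable def DD {R : Type*} [CommRing R] (p : ℕ) (x : ℕ → R) : ℕ → ℕ → R
  | 0, 0 => 1
  | 0, _ + 1 => 0
  | k + 1, 0 => x k * DD p x k 0
  | k + 1, i + 1 => (DD p x k i) ^ p + x k * DD p x k (i + 1)

lemma DD_gt {R : Type*} [CommRing R] {p : ℕ} (hp : p ≠ 0) (x : ℕ → R) :
    ∀ k i, k < i → DD p x k i = 0
  | 0, 0, h => by omega
  | 0, _ + 1, _ => by simp [DD]
  | k + 1, 0, h => by omega
  | k + 1, i + 1, h => by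
    simp [DD, DD_gt hp x k i (by omega), DD_gt hp x k (i + 1) (by omega), hp]

lemma DD_self {R : Type*} [CommRing R] {p : ℕ} (hp : p ≠ 0) (x : ℕ → R) :
    ∀ k, DD p x k k = 1
  | 0 => by simp [DD]
  | k + 1 => by simp [DD, DD_self hp x k, DD_gt hp x k (k + 1) (by omega)]

lemma map_DD {R S : Type*} [CommRing R] [CommRing S] (g : R →+* S) (p : ℕ) (x : ℕ → R) :
    ∀ k i, g (DD p x k i) = DD p (fun j => g (x j)) k i
  | 0, 0 => by simp [DD]
  | 0, _ + 1 => by simp [DD]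
  | k + 1, 0 => by simp [DD, map_DD g p x k 0]
  | k + 1, i + 1 => by simp [DD, map_DD g p x k i, map_DD g p x k (i + 1)]

section comb
variable {p n : ℕ} [Fact p.Prime]

/-- variables indexed by naturals -/
noncomputable def xv (p n : ℕ) (j : ℕ) : MvPolynomial (Fin n) (ZMod p) :=
  if h : j < n then X ⟨j, h⟩ else 0

lemma DD_supp : ∀ k i, DD p (xv p n) k i ∈ supported (ZMod p) {j : Fin n | j.val < k}
  | 0, 0 => by simp only [DD]; exact one_mem _
  | 0, _ + 1 => by simp only [DD]; exact zero_mem _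
  | k + 1, i => by
    have hm : supported (ZMod p) {j : Fin n | j.val < k} ≤
        supported (ZMod p) {j : Fin n | j.val < k + 1} :=
      supported_mono (fun j hj => by simp at hj ⊢; omega)
    have hx : xv p n k ∈ supported (ZMod p) {j : Fin n | j.val < k + 1} := by
      unfold xv
      split_ifs with h
      · rw [X_mem_supported]; simp
      · exact zero_mem _
    cases i with
    | zero => exact mul_mem hx (hm (DD_supp k 0))
    | succ i =>
      exact add_mem (pow_mem (hm (DD_supp k i)) p) (mul_mem hx (hm (DD_supp k (i + 1))))

lemma free_zero {A : MvPolynomial (Fin n) (ZMod p)} {v : Fin n} {k : ℕ} (hv : k ≤ v.val)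
    (hA : A ∈ supported (ZMod p) {j : Fin n | j.val < k}) {e : Fin n →₀ ℕ}
    (he : e v ≠ 0) : coeff e A = 0 := by
  by_contra h
  rw [mem_supported] at hA
  have := hA (by
    rw [Finset.mem_coe, mem_vars_iff_mem_support]
    exact ⟨e, mem_support_iff.2 h, Finsupp.mem_support_iff.2 he⟩)
  simp at this
  omega

lemma coeff_ne {A : MvPolynomial (Fin n) (ZMod p)} {v : Fin n} {k : ℕ} (hv : k ≤ v.val)
    (hA : A ∈ supported (ZMod p) {j : Fin n | j.val < k}) {e : Fin n →₀ ℕ} {m : ℕ}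
    (he : e v ≠ m) : coeff e (X v ^ m * A) = 0 := by
  rw [X_pow_eq_monomial, coeff_monomial_mul']
  split_ifs with h
  · rw [free_zero hv hA, mul_zero]
    have := h v
    simp at this ⊢
    omega
  · rfl

lemma coeff_eq (A : MvPolynomial (Fin n) (ZMod p)) {v : Fin n} {e : Fin n →₀ ℕ} {m : ℕ}
    (he : e v = m) : coeff e (X v ^ m * A) = coeff (e - Finsupp.single v m) A := by
  rw [X_pow_eq_monomial, coeff_monomial_mul', if_pos, one_mul]
  intro j
  by_cases h : v = j
  · subst h; simp [he]
  · simp [h]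

lemma supp_pow {A B : MvPolynomial (Fin n) (ZMod p)} (h : A.support ⊆ B.support) :
    (A ^ p).support ⊆ (B ^ p).support := by
  classical
  have hp : p ≠ 0 := (Fact.out : p.Prime).ne_zero
  rw [← expand_zmod, ← expand_zmod, support_expand _ hp, support_expand _ hp]
  exact Finset.image_subset_image h

lemma supp_iff {A B : MvPolynomial (Fin n) (ZMod p)} :
    A.support ⊆ B.support ↔ ∀ e, coeff e B = 0 → coeff e A = 0 := by
  constructor
  · intro h e hB
    by_contra hA
    exact (mem_support_iff.1 (h (mem_support_iff.2 hA))) hB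
  · intro h e he
    rw [mem_support_iff] at he ⊢
    exact fun hB => he (h e hB)

/-- main support comparison, by the exponent of one new variable -/
lemma supp_step {v : Fin n} {k m : ℕ} (hv : k ≤ v.val) (hm : 1 < m)
    {A0 A1 B0 B1 B2 B3 : MvPolynomial (Fin n) (ZMod p)}
    (a0 : A0 ∈ supported (ZMod p) {j : Fin n | j.val < k})
    (a1 : A1 ∈ supported (ZMod p) {j : Fin n | j.val < k})
    (b0 : B0 ∈ supported (ZMod p) {j : Fin n | j.val < k})
    (b1 : B1 ∈ supported (ZMod p) {j : Fin n | j.val < k})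
    (b2 : B2 ∈ supported (ZMod p) {j : Fin n | j.val < k})
    (b3 : B3 ∈ supported (ZMod p) {j : Fin n | j.val < k})
    (h0 : A0.support ⊆ B0.support) (h1 : A1.support ⊆ B2.support) :
    (A0 + X v ^ m * A1).support ⊆
      (B0 + X v ^ 1 * B1 + X v ^ m * B2 + X v ^ (m + 1) * B3).support := by
  rw [supp_iff] at *
  intro e
  by_cases e0 : e v = 0
  · simp only [coeff_add]
    rw [coeff_ne hv a1 (by omega), coeff_ne hv b1 (by omega), coeff_ne hv b2 (by omega),
      coeff_ne hv b3 (by omega)]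
    simpa using h0 e
  · by_cases e1 : e v = m
    · simp only [coeff_add]
      rw [free_zero hv a0 e0, free_zero hv b0 e0, coeff_eq A1 e1, coeff_eq B2 e1,
        coeff_ne hv b1 (by omega), coeff_ne hv b3 (by omega)]
      simpa using h1 _
    · intro _
      simp only [coeff_add]
      rw [free_zero hv a0 e0, coeff_ne hv a1 e1, add_zero]

lemma supp_step' {v : Fin n} {k m : ℕ} (hv : k ≤ v.val) (hm : 0 < m)
    {A0 A1 B0 B1 : MvPolynomial (Fin n) (ZMod p)}
    (a0 : A0 ∈ supported (ZMod p) {j : Fin n | j.val < k})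
    (a1 : A1 ∈ supported (ZMod p) {j : Fin n | j.val < k})
    (b0 : B0 ∈ supported (ZMod p) {j : Fin n | j.val < k})
    (b1 : B1 ∈ supported (ZMod p) {j : Fin n | j.val < k})
    (h0 : A0.support ⊆ B0.support) (h1 : A1.support ⊆ B1.support) :
    (A0 + X v ^ m * A1).support ⊆ (B0 + X v ^ m * B1).support := by
  rw [supp_iff] at *
  intro e
  by_cases e0 : e v = 0
  · simp only [coeff_add]
    rw [coeff_ne hv a1 (by omega), coeff_ne hv b1 (by omega)]
    simpa using h0 e
  · by_cases e1 : e v = m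
    · simp only [coeff_add]
      rw [free_zero hv a0 e0, free_zero hv b0 e0, coeff_eq A1 e1, coeff_eq B1 e1]
      simpa using h1 _
    · intro _
      simp only [coeff_add]
      rw [free_zero hv a0 e0, coeff_ne hv a1 e1, add_zero]

lemma sub_of_eq {A B A' B' : MvPolynomial (Fin n) (ZMod p)} (hA : A = A') (hB : B = B')
    (h : A'.support ⊆ B'.support) : A.support ⊆ B.support := by
  subst hA hB; exact h

lemma add_pow_pp (A B : MvPolynomial (Fin n) (ZMod p)) (j : ℕ) :
    (A + B) ^ p ^ j = A ^ p ^ j + B ^ p ^ j := add_pow_char_pow ..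

lemma compE : ∀ (k i j l : ℕ), k ≤ n → i ≤ l → k = l + j →
    (DD p (xv p n) k i ^ p ^ j).support ⊆
      (DD p (xv p n) k (i + j) * DD p (xv p n) k l ^ p ^ j).support := by
  have hp : p ≠ 0 := (Fact.out : p.Prime).ne_zero
  have hp1 : 1 < p := (Fact.out : p.Prime).one_lt
  intro k
  induction k with
  | zero =>
    intro i j l _ hil h
    obtain rfl : l = 0 := by omega
    obtain rfl : j = 0 := by omega
    obtain rfl : i = 0 := by omega
    simp [DD]
  | succ k ih =>
    intro i j l hk hil h
    rcases j with _ | j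
    · obtain rfl : l = k + 1 := by omega
      rw [DD_self hp]; simp
    have hS := fun i => DD_supp (p := p) (n := n) k i
    have hv : k ≤ (⟨k, by omega⟩ : Fin n).val := le_rfl
    have hm : 1 < p ^ (j + 1) := Nat.one_lt_pow (by omega) hp1
    have hx : xv p n k = X ⟨k, by omega⟩ := by simp [xv, show k < n by omega]
    have key2 := supp_pow (ih i j l (by omega) hil (by omega))
    rw [mul_pow, ← pow_mul, ← pow_mul, ← pow_succ] at key2
    rcases l with _ | l
    · obtain rfl : i = 0 := by omega
      have := supp_step (A0 := 0) (B0 := 0) (B1 := 0) hv hm (zero_mem _)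
        (pow_mem (hS 0) (p ^ (j + 1)))
        (zero_mem _) (zero_mem _) (mul_mem (pow_mem (hS (0 + j)) p) (pow_mem (hS 0) (p ^ (j + 1))))
        (mul_mem (hS (0 + (j + 1))) (pow_mem (hS 0) (p ^ (j + 1)))) (by simp) key2
      refine sub_of_eq ?_ ?_ this
      · simp only [DD, hx]; ring
      · rw [← add_assoc 0 j 1]; simp only [DD, hx]; ring
    · have hR : DD p (xv p n) (k + 1) (i + (j + 1)) * DD p (xv p n) (k + 1) (l + 1) ^ p ^ (j + 1)
        = DD p (xv p n) k (i + j) ^ p * DD p (xv p n) k l ^ (p * p ^ (j + 1)) +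
          X ⟨k, by omega⟩ ^ 1 * (DD p (xv p n) k (i + (j + 1)) *
            DD p (xv p n) k l ^ (p * p ^ (j + 1))) +
          X ⟨k, by omega⟩ ^ p ^ (j + 1) * (DD p (xv p n) k (i + j) ^ p *
            DD p (xv p n) k (l + 1) ^ p ^ (j + 1)) +
          X ⟨k, by omega⟩ ^ (p ^ (j + 1) + 1) * (DD p (xv p n) k (i + (j + 1)) *
            DD p (xv p n) k (l + 1) ^ p ^ (j + 1)) := by
        rw [← add_assoc i j 1]; simp only [DD, hx]
        rw [add_pow_pp, ← pow_mul]; ring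
      rw [hR]
      have m0 := (mul_mem (pow_mem (hS (i + j)) p) (pow_mem (hS l) (p * p ^ (j + 1))))
      have m1 := (mul_mem (hS (i + (j + 1))) (pow_mem (hS l) (p * p ^ (j + 1))))
      have m2 := (mul_mem (pow_mem (hS (i + j)) p) (pow_mem (hS (l + 1)) (p ^ (j + 1))))
      have m3 := (mul_mem (hS (i + (j + 1))) (pow_mem (hS (l + 1)) (p ^ (j + 1))))
      rcases i with _ | i
      · have := supp_step (A0 := 0) hv hm (zero_mem _)
          (pow_mem (hS 0) (p ^ (j + 1))) m0 m1 m2 m3 (by simp) key2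
        refine sub_of_eq ?_ rfl this
        simp only [DD, hx]; ring
      · have key1 := supp_pow (ih i (j + 1) l (by omega) (by omega) (by omega))
        rw [mul_pow, ← pow_mul, ← pow_mul, mul_comm _ p,
          show i + (j + 1) = i + 1 + j by omega] at key1
        have := supp_step hv hm (pow_mem (hS i) (p * p ^ (j + 1)))
          (pow_mem (hS (i + 1)) (p ^ (j + 1))) m0 m1 m2 m3 key1 key2
        refine sub_of_eq ?_ rfl this
        simp only [DD, hx]
        rw [add_pow_pp, ← pow_mul]; ring

lemma compF (k : ℕ) : ∀ (t i j l : ℕ), k + t ≤ n → i ≤ l → k = l + j →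
    (DD p (xv p n) (k + t) i ^ p ^ j).support ⊆
      (DD p (xv p n) k (i + j) * DD p (xv p n) (k + t) l ^ p ^ j).support := by
  have hp : p ≠ 0 := (Fact.out : p.Prime).ne_zero
  intro t
  induction t with
  | zero => exact fun i j l h1 h2 h3 => compE k i j l h1 h2 h3
  | succ t ih =>
    intro i j l hk hil h
    have hS := fun i => DD_supp (p := p) (n := n) (k + t) i
    have hS' : ∀ i, DD p (xv p n) k i ∈ supported (ZMod p) {j : Fin n | j.val < k + t} :=
      fun i => supported_mono (fun j hj => by simp at hj ⊢; omega) (DD_supp (p := p) (n := n) k i)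
    have hv : k + t ≤ (⟨k + t, by omega⟩ : Fin n).val := le_rfl
    have hm : 0 < p ^ j := Nat.pos_of_ne_zero (pow_ne_zero _ hp)
    have hx : xv p n (k + t) = X ⟨k + t, by omega⟩ := by simp [xv, show k + t < n by omega]
    have key2 := ih i j l (by omega) hil (by omega)
    rw [← add_assoc k t 1]
    rcases l with _ | l
    · obtain rfl : i = 0 := by omega
      have := supp_step' (A0 := 0) (B0 := 0) hv hm (zero_mem _) (pow_mem (hS 0) (p ^ j))
        (zero_mem _) (mul_mem (hS' (0 + j)) (pow_mem (hS 0) (p ^ j))) (by simp) key2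
      refine sub_of_eq ?_ ?_ this
      · simp only [DD, hx]; ring
      · simp only [DD, hx]; ring
    · have hR : DD p (xv p n) k (i + j) * DD p (xv p n) (k + t + 1) (l + 1) ^ p ^ j
        = DD p (xv p n) k (i + j) * DD p (xv p n) (k + t) l ^ p ^ (j + 1) +
          X ⟨k + t, by omega⟩ ^ p ^ j * (DD p (xv p n) k (i + j) *
            DD p (xv p n) (k + t) (l + 1) ^ p ^ j) := by
        simp only [DD, hx]
        rw [add_pow_pp, ← pow_mul]; ring
      rw [hR]
      have m0 := (mul_mem (hS' (i + j)) (pow_mem (hS l) (p ^ (j + 1))))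
      have m1 := (mul_mem (hS' (i + j)) (pow_mem (hS (l + 1)) (p ^ j)))
      rcases i with _ | i
      · have := supp_step' (A0 := 0) hv hm (zero_mem _)
          (pow_mem (hS 0) (p ^ j)) m0 m1 (by simp) key2
        refine sub_of_eq ?_ rfl this
        simp only [DD, hx]; ring
      · have key1 := ih i (j + 1) l (by omega) (by omega) (by omega)
        rw [show i + (j + 1) = i + 1 + j by omega] at key1
        have := supp_step' hv hm (pow_mem (hS i) (p ^ (j + 1)))
          (pow_mem (hS (i + 1)) (p ^ j)) m0 m1 key1 key2
        refine sub_of_eq ?_ rfl this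
        simp only [DD, hx]
        rw [add_pow_pp, ← pow_mul]; ring

lemma compH (k s : ℕ) : ∀ (t : ℕ), k + t ≤ n → ∀ e : Fin n →₀ ℕ,
    (∀ j : Fin n, k ≤ j.val → j.val < k + t → e j ≠ 0) →
    coeff e (DD p (xv p n) k s * DD p (xv p n) (k + t) k - DD p (xv p n) (k + t) s) = 0 := by
  have hp : p ≠ 0 := (Fact.out : p.Prime).ne_zero
  intro t
  induction t with
  | zero => intro _ e _; simp [DD_self hp]
  | succ t ih =>
    intro hk e he
    have hS := fun i => DD_supp (p := p) (n := n) (k + t) i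
    have hS' : ∀ i, DD p (xv p n) k i ∈ supported (ZMod p) {j : Fin n | j.val < k + t} :=
      fun i => supported_mono (fun j hj => by simp at hj ⊢; omega) (DD_supp (p := p) (n := n) k i)
    have hv : k + t ≤ (⟨k + t, by omega⟩ : Fin n).val := le_rfl
    have hx : xv p n (k + t) = X ⟨k + t, by omega⟩ := by simp [xv, show k + t < n by omega]
    have hdec : ∀ i, ∃ A ∈ supported (ZMod p) {j : Fin n | j.val < k + t},
        DD p (xv p n) (k + t + 1) i = A + X ⟨k + t, by omega⟩ * DD p (xv p n) (k + t) i := by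
      intro i
      rcases i with _ | i
      · exact ⟨0, zero_mem _, by simp only [DD, hx]; ring⟩
      · exact ⟨_, pow_mem (hS i) p, by simp only [DD, hx]⟩
    obtain ⟨A, hA, eA⟩ := hdec k
    obtain ⟨B, hB, eB⟩ := hdec s
    rw [← add_assoc k t 1, eA, eB]
    have e0 := he ⟨k + t, by omega⟩ (by simp) (by simp)
    have hF := sub_mem (mul_mem (hS' s) hA) hB
    have hG := sub_mem (mul_mem (hS' s) (hS k)) (hS s)
    rw [show DD p (xv p n) k s * (A + X ⟨k + t, by omega⟩ * DD p (xv p n) (k + t) k) -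
      (B + X ⟨k + t, by omega⟩ * DD p (xv p n) (k + t) s) =
      (DD p (xv p n) k s * A - B) + X ⟨k + t, by omega⟩ ^ 1 *
      (DD p (xv p n) k s * DD p (xv p n) (k + t) k - DD p (xv p n) (k + t) s) by ring,
      coeff_add, free_zero hv hF e0, zero_add]
    by_cases e1 : e ⟨k + t, by omega⟩ = 1
    · rw [coeff_eq _ e1]
      apply ih (by omega)
      intro j h1 h2
      have : (⟨k + t, by omega⟩ : Fin n) ≠ j := fun h => by rw [← h] at h2; simp at h2
      simpa [Finsupp.single_apply, this] using he j h1 (by omega)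
    · exact coeff_ne hv hG e1

end comb

section link
variable {p n : ℕ} [Fact p.Prime]

lemma prod_zmod {K : Type*} [Field K] [Algebra (ZMod p) K] (z : K) :
    ∏ c : ZMod p, (z - algebraMap (ZMod p) K c) = z ^ p - z := by
  have hp1 : 1 < p := (Fact.out : p.Prime).one_lt
  have h1 : (Polynomial.X ^ p - Polynomial.X : Polynomial (ZMod p)) =
      ∏ c : ZMod p, (Polynomial.X - Polynomial.C c) := by
    have hr := FiniteField.roots_X_pow_card_sub_X (ZMod p)
    rw [ZMod.card] at hr
    have hm : (Polynomial.X ^ p - Polynomial.X : Polynomial (ZMod p)).Monic := by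
      apply Polynomial.monic_X_pow_sub
      rw [Polynomial.degree_X]; exact_mod_cast hp1
    have := Polynomial.prod_multiset_X_sub_C_of_monic_of_roots_card_eq hm (by
      rw [hr, FiniteField.X_pow_card_sub_X_natDegree_eq _ hp1]
      simp [ZMod.card])
    rw [← this, hr]; rfl
  have h2 := congrArg (Polynomial.aeval z) h1
  simpa [map_prod] using h2.symm

lemma prod_dom {R : Type*} [CommRing R] [IsDomain R] [Algebra (ZMod p) R] (T w : R) :
    ∏ c : ZMod p, (T - algebraMap (ZMod p) R c * w) = T ^ p - w ^ (p - 1) * T := by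
  have hp0 : p ≠ 0 := (Fact.out : p.Prime).ne_zero
  have hp1 : p - 1 ≠ 0 := by have := (Fact.out : p.Prime).one_lt; omega
  by_cases hw : w = 0
  · subst hw
    simp [ZMod.card, hp1]
  apply IsFractionRing.injective R (FractionRing R)
  set g := algebraMap R (FractionRing R) with hg
  have hgw : g w ≠ 0 := by
    intro h
    exact hw (IsFractionRing.injective R (FractionRing R) (by rw [← hg, h, map_zero]))
  have := prod_zmod (p := p) (g T / g w)
  have e : ∀ c : ZMod p, g T - g (algebraMap (ZMod p) R c) * g w =
      (g T / g w - algebraMap (ZMod p) (FractionRing R) c) * g w := by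
    intro c
    rw [sub_mul, div_mul_cancel₀ _ hgw, IsScalarTower.algebraMap_apply (ZMod p) R (FractionRing R)]
  simp only [map_prod, map_sub, map_mul, map_pow]
  rw [Finset.prod_congr rfl (fun c _ => e c), Finset.prod_mul_distrib, this]
  simp only [Finset.prod_const, Finset.card_univ, ZMod.card]
  rw [sub_mul, div_pow, div_mul_cancel₀ _ (pow_ne_zero _ hgw)]
  congr 1
  have : g w ^ p = g w ^ (p - 1) * g w := by
    rw [← pow_succ]; congr 1; omega
  rw [this]; field_simp

/-- `h` indexed by naturals -/
noncomputable def hv (p n : ℕ) [Fact p.Prime] (j : ℕ) : MvPolynomial (Fin n) (ZMod p) :=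
  if h : j < n then hGen p n ⟨j, h⟩ else 0

/-- additive form -/
noncomputable def ff (p n k : ℕ) [Fact p.Prime] : Polynomial (MvPolynomial (Fin n) (ZMod p)) :=
  ∑ i ∈ Finset.range (k + 1),
    Polynomial.C ((-1) ^ (k + i) * DD p (hv p n) k i) * Polynomial.X ^ p ^ i

lemma V_coeff {k : ℕ} (u : MvPolynomial (Fin n) (ZMod p)) (hu : u ∈ V p n k) (v : Fin n)
    (h : k ≤ v.val) : coeff (Finsupp.single v 1) u = 0 := by
  simp only [V, Finset.mem_image] at hu
  obtain ⟨c, -, rfl⟩ := hu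
  rw [coeff_sum]
  apply Finset.sum_eq_zero
  intro j hj
  simp only [Finset.mem_filter, Finset.mem_univ, true_and] at hj
  rw [coeff_C_mul, coeff_X, if_neg, mul_zero]
  intro he
  have := (Finsupp.single_left_inj (one_ne_zero)).1 he
  subst this; omega

lemma filter_succ {k : ℕ} (hk : k < n) :
    (Finset.univ.filter (fun j : Fin n => j.val < k + 1)) =
      insert ⟨k, hk⟩ (Finset.univ.filter (fun j : Fin n => j.val < k)) := by
  ext j
  simp [Fin.ext_iff]; omega

lemma V_succ {k : ℕ} (hk : k < n) :
    V p n (k + 1) = (V p n k ×ˢ (Finset.univ : Finset (ZMod p))).image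
      (fun uc => uc.1 + C uc.2 * X ⟨k, hk⟩) := by
  ext u
  simp only [V, Finset.mem_image, Finset.mem_univ, true_and, Finset.mem_product, and_true,
    Prod.exists]
  rw [filter_succ hk]
  constructor
  · rintro ⟨c, rfl⟩
    refine ⟨_, c ⟨k, hk⟩, ⟨c, rfl⟩, ?_⟩
    rw [Finset.sum_insert (by simp), add_comm]
  · rintro ⟨_, b, ⟨c, rfl⟩, rfl⟩
    refine ⟨Function.update c ⟨k, hk⟩ b, ?_⟩
    rw [Finset.sum_insert (by simp), add_comm]
    congr 1
    · apply Finset.sum_congr rfl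
      intro j hj
      rw [Function.update_of_ne]
      rintro rfl
      simp at hj
    · simp

lemma f_succ_prod {k : ℕ} (hk : k < n) :
    f p n (k + 1) = ∏ c : ZMod p, (f p n k).comp
      (Polynomial.X - Polynomial.C (C c * X ⟨k, hk⟩)) := by
  rw [f, V_succ hk, Finset.prod_image, Finset.prod_product_right]
  · apply Finset.prod_congr rfl
    intro c _
    rw [f, Polynomial.prod_comp]
    apply Finset.prod_congr rfl
    intro u _
    simp only [Polynomial.sub_comp, Polynomial.X_comp, Polynomial.C_comp, map_add]
    ring
  · rintro ⟨u, c⟩ h1 ⟨u', c'⟩ h2 h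
    simp only [Finset.coe_product, Set.mem_prod, Finset.mem_coe] at h1 h2
    have e1 := V_coeff u h1.1 ⟨k, hk⟩ le_rfl
    have e2 := V_coeff u' h2.1 ⟨k, hk⟩ le_rfl
    have := congrArg (coeff (Finsupp.single ⟨k, hk⟩ 1)) h
    simp only [coeff_add, e1, e2, coeff_C_mul, coeff_X, zero_add, if_true, mul_one] at this
    subst this
    simpa using h

lemma ff_comp (k : ℕ) (v : MvPolynomial (Fin n) (ZMod p)) :
    (ff p n k).comp (Polynomial.X - Polynomial.C v) =
      ff p n k - Polynomial.C ((ff p n k).eval v) := by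
  simp only [ff, Polynomial.sum_comp, Polynomial.eval_finsetSum, map_sum,
    ← Finset.sum_sub_distrib]
  apply Finset.sum_congr rfl
  intro i _
  simp only [Polynomial.mul_comp, Polynomial.C_comp, Polynomial.pow_comp, Polynomial.X_comp,
    Polynomial.eval_mul, Polynomial.eval_C, Polynomial.eval_pow, Polynomial.eval_X]
  rw [sub_pow_char_pow, mul_sub]
  simp only [map_mul, map_pow]

lemma ff_eval (k : ℕ) (c : ZMod p) (v : MvPolynomial (Fin n) (ZMod p)) :
    (ff p n k).eval (C c * v) = C c * (ff p n k).eval v := by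
  simp only [ff, Polynomial.eval_finsetSum, Finset.mul_sum]
  apply Finset.sum_congr rfl
  intro i _
  simp only [Polynomial.eval_mul, Polynomial.eval_C, Polynomial.eval_pow, Polynomial.eval_X]
  rw [mul_pow, ← map_pow, ZMod.pow_card_pow]
  ring

lemma neg_one_pow_pow (m : ℕ) :
    ((-1 : MvPolynomial (Fin n) (ZMod p)) ^ m) ^ p = (-1) ^ m := by
  rw [← pow_mul, mul_comm m p, pow_mul, neg_one_pow_expChar]

lemma ff_pow (k : ℕ) : ff p n k ^ p = ∑ i ∈ Finset.range (k + 1),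
      Polynomial.C ((-1) ^ (k + i) * DD p (hv p n) k i ^ p) * Polynomial.X ^ p ^ (i + 1) := by
  rw [ff, sum_pow_char]
  apply Finset.sum_congr rfl
  intro i _
  generalize DD p (hv p n) k i = D
  have hN := neg_one_pow_pow (p := p) (n := n) (k + i)
  generalize (-1 : MvPolynomial (Fin n) (ZMod p)) ^ (k + i) = a at *
  rw [mul_pow, ← map_pow, mul_pow, hN, ← pow_mul, ← pow_succ]

lemma ff_ext (k : ℕ) : ff p n k = ∑ i ∈ Finset.range (k + 1 + 1),
      Polynomial.C ((-1) ^ (k + i) * DD p (hv p n) k i) * Polynomial.X ^ p ^ i := by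
  have hp0 : p ≠ 0 := (Fact.out : p.Prime).ne_zero
  rw [Finset.sum_range_succ, DD_gt hp0 _ k (k + 1) (by omega), mul_zero, map_zero, zero_mul,
    add_zero, ff]

lemma ff_succ (k : ℕ) :
    ff p n (k + 1) = ff p n k ^ p - Polynomial.C (hv p n k) * ff p n k := by
  have e1 := ff_pow (p := p) (n := n) k
  have e2 := ff_ext (p := p) (n := n) k
  rw [e1]
  rw [Finset.sum_range_succ'] at e2
  conv_rhs => rw [e2]
  rw [ff, Finset.sum_range_succ', mul_add, Finset.mul_sum, ← sub_sub,
    ← Finset.sum_sub_distrib, sub_eq_add_neg]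
  have hz : DD p (hv p n) (k + 1) 0 = hv p n k * DD p (hv p n) k 0 := by simp only [DD]
  have hs : ∀ i, DD p (hv p n) (k + 1) (i + 1) =
      DD p (hv p n) k i ^ p + hv p n k * DD p (hv p n) k (i + 1) := by intro i; simp only [DD]
  refine congrArg₂ (· + ·) ?_ ?_
  · apply Finset.sum_congr rfl
    intro i _
    rw [hs i, show (-1 : MvPolynomial (Fin n) (ZMod p)) ^ (k + 1 + (i + 1)) = (-1) ^ (k + i) by
      ring, show (-1 : MvPolynomial (Fin n) (ZMod p)) ^ (k + (i + 1)) = - (-1) ^ (k + i) by ring]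
    generalize (-1 : MvPolynomial (Fin n) (ZMod p)) ^ (k + i) = a
    generalize (Polynomial.X : Polynomial (MvPolynomial (Fin n) (ZMod p))) ^ p ^ (i + 1) = z
    simp only [map_mul, map_add, map_neg]
    ring
  · rw [hz, show (-1 : MvPolynomial (Fin n) (ZMod p)) ^ (k + 1 + 0) = - (-1) ^ (k + 0) by ring]
    generalize (Polynomial.X : Polynomial (MvPolynomial (Fin n) (ZMod p))) ^ p ^ 0 = z
    generalize (-1 : MvPolynomial (Fin n) (ZMod p)) ^ (k + 0) = a
    simp only [map_mul, map_neg]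
    ring

lemma f_eq : ∀ k, k ≤ n → f p n k = ff p n k
  | 0, _ => by
    have : V p n 0 = {0} := by
      ext u; simp [V, eq_comm]
    simp [f, ff, this, DD]
  | k + 1, hk => by
    have ih := f_eq k (by omega)
    rw [f_succ_prod (by omega : k < n), ff_succ, ih]
    have : ∀ c : ZMod p, (ff p n k).comp
        (Polynomial.X - Polynomial.C (C c * X ⟨k, by omega⟩)) =
        ff p n k - algebraMap (ZMod p) (Polynomial (MvPolynomial (Fin n) (ZMod p))) c *
          Polynomial.C ((ff p n k).eval (X ⟨k, by omega⟩)) := by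
      intro c
      rw [ff_comp, ff_eval, map_mul]; rfl
    rw [Finset.prod_congr rfl (fun c _ => this c), prod_dom]
    simp only [hv, show k < n by omega, dif_pos, hGen, ih, map_pow]

lemma ff_coeff (k i : ℕ) (hi : i ≤ k) :
    (ff p n k).coeff (p ^ i) = (-1) ^ (k + i) * DD p (hv p n) k i := by
  have hp1 : 1 < p := (Fact.out : p.Prime).one_lt
  simp only [ff, Polynomial.finsetSum_coeff, Polynomial.coeff_C_mul, Polynomial.coeff_X_pow]
  rw [Finset.sum_eq_single i]
  · simp
  · intro j _ hj
    rw [if_neg, mul_zero]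
    intro h
    exact hj (Nat.pow_right_injective hp1 h).symm
  · intro h; simp at h; omega

lemma aeval_DD (k i : ℕ) : aeval (hGen p n) (DD p (xv p n) k i) = DD p (hv p n) k i := by
  have := map_DD (aeval (hGen p n) : MvPolynomial (Fin n) (ZMod p) →ₐ[ZMod p] _).toRingHom p
    (xv p n) k i
  have e : (fun j => (aeval (hGen p n) : MvPolynomial (Fin n) (ZMod p) →ₐ[ZMod p] _).toRingHom
      (xv p n j)) = hv p n := by
    funext j
    simp only [xv, hv]
    split_ifs <;> simp
  rw [e] at this
  exact this

lemma d_eq (k i : ℕ) (hk : k ≤ n) (hi : i ≤ k) :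
    d p n k i = aeval (hGen p n) (DD p (xv p n) k i) := by
  rw [d, f_eq k hk, ff_coeff k i hi, aeval_DD, ← mul_assoc, ← pow_add,
    show k - i + (k + i) = 2 * k by omega, pow_mul]
  simp

lemma h_inj : Function.Injective (aeval (hGen p n) :
    MvPolynomial (Fin n) (ZMod p) →ₐ[ZMod p] MvPolynomial (Fin n) (ZMod p)) := by
  let A := Algebra.adjoin (ZMod p) (Set.range (hGen p n))
  have hmem : ∀ k i, DD p (hv p n) k i ∈ A := by
    intro k i
    rw [← aeval_DD]
    simp only [A, Algebra.adjoin_range_eq_range_aeval]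
    exact ⟨_, rfl⟩
  have hmonic : (f p n n).Monic := Polynomial.monic_prod_of_monic _ _
    (fun u _ => Polynomial.monic_X_sub_C u)
  have h_integral : ∀ j : Fin n, IsIntegral A (X j : MvPolynomial (Fin n) (ZMod p)) := by
    intro j
    have hl : f p n n ∈ Polynomial.lifts (algebraMap A (MvPolynomial (Fin n) (ZMod p))) := by
      rw [f_eq n le_rfl, ff]
      refine sum_mem fun i _ => mul_mem (Polynomial.C'_mem_lifts ?_) (Polynomial.X_pow_mem_lifts _ _)
      exact ⟨⟨_, mul_mem (pow_mem (neg_mem (one_mem A)) _) (hmem n i)⟩, rfl⟩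
    obtain ⟨q, hq, -, hqm⟩ := Polynomial.lifts_and_natDegree_eq_and_monic hl hmonic
    refine ⟨q, hqm, ?_⟩
    rw [← Polynomial.eval_map, hq, f, Polynomial.eval_prod]
    apply Finset.prod_eq_zero (i := X j)
    · simp only [V, Finset.mem_image, Finset.mem_univ, true_and]
      refine ⟨Pi.single j 1, ?_⟩
      rw [Finset.sum_eq_single j]
      · simp
      · intro b _ hb; simp [hb]
      · simp
    · simp
  have : Algebra.IsIntegral A (MvPolynomial (Fin n) (ZMod p)) := by
    constructor
    intro x
    induction x using MvPolynomial.induction_on with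
    | C a => exact isIntegral_algebraMap (R := A) (x := algebraMap (ZMod p) A a)
    | add a b ha hb => exact ha.add hb
    | mul_X a j ha => exact ha.mul (h_integral j)
  have halg : Algebra.IsAlgebraic A (MvPolynomial (Fin n) (ZMod p)) := inferInstance
  have := Algebra.IsAlgebraic.isTranscendenceBasis_of_le_trdeg_of_finite (ZMod p) (hGen p n)
    (by rw [MvPolynomial.trdeg_of_isDomain]; simp)
  exact this.1

end link

/-- every monomial (in the `h`'s) of `d_{k+t,s}` is a monomial of
`d_{k,s} d_{k+t,k}`, and no monomial of the difference is divisible by `h_{k+1} ⋯ h_{k+t}`. -/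
theorem stmt11 (p n : ℕ) [Fact p.Prime] (s k t : ℕ) (hs : s < k) (ht : 1 ≤ t)
    (hkt : k + t ≤ n) (P Q : MvPolynomial (Fin n) (ZMod p))
    (hP : aeval (hGen p n) P = d p n (k + t) s)
    (hQ : aeval (hGen p n) Q = d p n k s * d p n (k + t) k) :
    P.support ⊆ Q.support ∧
    ∀ e ∈ (Q - P).support, ∃ j : Fin n, k ≤ j.val ∧ j.val < k + t ∧ e j = 0 := by
  have e1 : P = DD p (xv p n) (k + t) s :=
    h_inj (by rw [hP, d_eq _ _ hkt (by omega)])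
  have e2 : Q = DD p (xv p n) k s * DD p (xv p n) (k + t) k :=
    h_inj (by rw [hQ, d_eq _ _ (by omega) (by omega), d_eq _ _ hkt (by omega), map_mul])
  subst e1 e2
  constructor
  · have := compF (p := p) (n := n) k t s 0 k hkt hs.le rfl
    simpa using this
  · intro e he
    by_contra! hc
    exact (mem_support_iff.1 he) (compH k s t hkt e hc)
end

section
/- Let 0 ≤ s < k, 0 ≤ q < t, and k + t ≤ n. Suppose P, Q ∈ MvPolynomial (Fin n) 𝔽_p satisfy aeval(h) P = d_{k+q,k} · d_{k+t,s} and aeval(h) Q = d_{k+q,s} · d_{k+t,k}, where aeval(h) substitutes h_1, …, h_n for the n variables. Then: (i) the support of P is contained in the support of Q (every monomial of d_{k+q,k} · d_{k+t,s}, written in the h's, is also a monomial of d_{k+q,s} · d_{k+t,k}); and (ii) no exponent vector in the support of Q - P has all of its coordinates at the positions corresponding to h_{k+q+1}, …, h_{k+t} nonzero, i.e. no monomial of Q - P is divisible by the product of the variables sent to h_{k+q+1} ⋯ h_{k+t}. -/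
open MvPolynomial

namespace Dick

/-- the variable with index `m`, or zero. -/
noncomputable def Z (p n m : ℕ) : MvPolynomial (Fin n) (ZMod p) :=
  if h : m < n then X ⟨m, h⟩ else 0

/-- generic version of `f`. -/
noncomputable def F (p n : ℕ) : ℕ → Polynomial (MvPolynomial (Fin n) (ZMod p))
  | 0 => Polynomial.X
  | m + 1 => F p n m ^ p - Polynomial.C (Z p n m) * F p n m

/-- integer-indexed coefficients of `F`. -/
noncomputable def E (p n m : ℕ) (i : ℤ) : MvPolynomial (Fin n) (ZMod p) :=
  if 0 ≤ i then (F p n m).coeff (p ^ i.toNat) else 0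

variable {p n : ℕ} [hp : Fact p.Prime]

theorem E_succ (m : ℕ) (i : ℤ) :
    E p n (m + 1) i = E p n m (i - 1) ^ p - Z p n m * E p n m i := by
  have hp0 := hp.out.pos
  have hpow : ∀ N, (F p n m ^ p).coeff N = if p ∣ N then ((F p n m).coeff (N / p)) ^ p else 0 := by
    intro N
    rw [← Polynomial.map_frobenius_expand p, Polynomial.coeff_map, Polynomial.coeff_expand hp0]
    split_ifs
    · rfl
    · simp
  unfold E
  rcases lt_trichotomy i 0 with h | h | h
  · rw [if_neg (by omega), if_neg (by omega), if_neg (by omega)]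
    simp [hp.out.ne_zero]
  · subst h
    simp [F, hpow, hp.out.one_lt.ne', hp.out.ne_zero]
  · obtain ⟨j, rfl⟩ : ∃ j : ℕ, i = j + 1 := ⟨(i - 1).toNat, by omega⟩
    rw [if_pos (by omega), if_pos (by omega), if_pos (by omega)]
    have h1 : ((j : ℤ) + 1).toNat = j + 1 := by omega
    have h2 : ((j : ℤ) + 1 - 1).toNat = j := by omega
    rw [h1, h2]
    simp only [F, Polynomial.coeff_sub, Polynomial.coeff_C_mul, hpow]
    rw [if_pos (dvd_pow_self p (by omega)), pow_succ, Nat.mul_div_cancel _ hp0]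

theorem E_zero (i : ℤ) : E p n 0 i = if i = 0 then 1 else 0 := by
  unfold E F
  split_ifs with h1 h2 h2
  · subst h2; simp
  · rw [Polynomial.coeff_X, if_neg]
    intro h
    have := (Nat.pow_eq_one.mp h.symm)
    have := hp.out.one_lt
    omega
  · omega
  · rfl

theorem E_supported (m : ℕ) (i : ℤ) :
    E p n m i ∈ supported (ZMod p) {j : Fin n | j.val < m} := by
  induction m generalizing i with
  | zero => rw [E_zero]; split_ifs; exacts [one_mem _, zero_mem _]
  | succ m ih =>
    have hm : ∀ i, E p n m i ∈ supported (ZMod p) {j : Fin n | j.val < m + 1} := by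
      intro i
      have hsub : {j : Fin n | j.val < m} ⊆ {j : Fin n | j.val < m + 1} := by
        intro j hj
        simp only [Set.mem_setOf_eq] at hj ⊢
        omega
      exact supported_mono hsub (ih i)
    rw [E_succ]
    refine sub_mem (pow_mem (hm _) _) (mul_mem ?_ (hm _))
    unfold Z
    split_ifs with h
    · exact X_mem_supported.mpr (Nat.lt_succ_self m)
    · exact zero_mem _

/-- free of variable `j`. -/
def Free (j : Fin n) (G : MvPolynomial (Fin n) (ZMod p)) : Prop := G ∈ supported (ZMod p) {i | i ≠ j}

theorem E_free (m : ℕ) (i : ℤ) (j : Fin n) (h : m ≤ j.val) : Free j (E p n m i) := by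
  have hsub : {l : Fin n | l.val < m} ⊆ {l : Fin n | l ≠ j} := by
    intro l hl
    simp only [Set.mem_setOf_eq] at hl ⊢
    rintro rfl
    omega
  exact supported_mono hsub (E_supported m i)

theorem Free.coeff {j : Fin n} {G : MvPolynomial (Fin n) (ZMod p)} (h : Free j G) (e : Fin n →₀ ℕ)
    (he : e j ≠ 0) : G.coeff e = 0 := by
  by_contra hc
  have : j ∈ G.vars := (mem_vars j).mpr ⟨e, mem_support_iff.mpr hc, Finsupp.mem_support_iff.mpr he⟩
  exact (mem_supported.mp h) this rfl

theorem Free.mul {j : Fin n} {G H : MvPolynomial (Fin n) (ZMod p)} (h : Free j G) (h' : Free j H) :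
  Free j (G * H) := mul_mem h h'
theorem Free.sub {j : Fin n} {G H : MvPolynomial (Fin n) (ZMod p)} (h : Free j G) (h' : Free j H) :
  Free j (G - H) := sub_mem h h'
theorem Free.pow {j : Fin n} {G : MvPolynomial (Fin n) (ZMod p)} (h : Free j G) (u : ℕ) :
  Free j (G ^ u) := pow_mem h u

theorem coeff_split {j : Fin n} {G : MvPolynomial (Fin n) (ZMod p)} (h : Free j G) (u : ℕ)
    (e : Fin n →₀ ℕ) : (X j ^ u * G).coeff e = if e j = u then G.coeff (e.erase j) else 0 := by
  rw [X_pow_eq_monomial, coeff_monomial_mul']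
  have hle : Finsupp.single j u ≤ e ↔ u ≤ e j := by simp
  split_ifs with h1 h2 h2
  · rw [one_mul]; congr 1
    ext i
    by_cases hi : i = j
    · subst hi; simp [h2]
    · simp [Finsupp.erase_ne hi, Finsupp.single_apply, Ne.symm hi]
  · rw [one_mul]
    apply h.coeff
    have := hle.mp h1
    simp; omega
  · exact absurd (hle.mpr h2.ge) h1
  · rfl

theorem supp2 {j : Fin n} {A B A' B' : MvPolynomial (Fin n) (ZMod p)} (hA : Free j A)
    (hB : Free j B) (hA' : Free j A') (hB' : Free j B') (u : ℕ) (hu : u ≠ 0)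
    (h1 : A.support ⊆ A'.support) (h2 : B.support ⊆ B'.support) :
    (A - X j ^ u * B).support ⊆ (A' - X j ^ u * B').support := by
  intro e he
  rw [mem_support_iff] at *
  have f1 := coeff_split hA 0 e
  have f2 := coeff_split hA' 0 e
  rw [pow_zero, one_mul] at f1 f2
  rw [coeff_sub, coeff_split hB, f1] at he
  rw [coeff_sub, coeff_split hB', f2]
  have g1 := @h1 (e.erase j)
  have g2 := @h2 (e.erase j)
  simp only [mem_support_iff] at g1 g2
  by_cases c0 : e j = 0
  · have q : ¬ e j = u := by omega
    rw [if_pos c0, if_neg q] at he ⊢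
    simpa using g1 (by simpa using he)
  · rw [if_neg c0] at he ⊢
    by_cases c1 : e j = u
    · rw [if_pos c1] at he ⊢
      simpa using g2 (by simpa using he)
    · rw [if_neg c1] at he
      simp at he

theorem supp4 {j : Fin n} {A B C D A' B' C' D' : MvPolynomial (Fin n) (ZMod p)} (hA : Free j A)
    (hB : Free j B) (hA' : Free j A') (hB' : Free j B') (hC : Free j C)
    (hD : Free j D) (hC' : Free j C') (hD' : Free j D') (u : ℕ) (hu : 1 < u)
    (h1 : (A * C).support ⊆ (A' * C').support) (h2 : (B * C).support ⊆ (B' * C').support)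
    (h3 : (A * D).support ⊆ (A' * D').support) (h4 : (B * D).support ⊆ (B' * D').support) :
    ((A - X j * B) * (C - X j ^ u * D)).support ⊆
      ((A' - X j * B') * (C' - X j ^ u * D')).support := by
  have expd : ∀ A B C D : MvPolynomial (Fin n) (ZMod p), (A - X j * B) * (C - X j ^ u * D) =
      X j ^ 0 * (A * C) - X j ^ 1 * (B * C) - X j ^ u * (A * D) + X j ^ (u + 1) * (B * D) := by
    intros; ring
  intro e he
  rw [mem_support_iff] at *
  rw [expd] at *
  rw [coeff_add, coeff_sub, coeff_sub, coeff_split (hA.mul hC), coeff_split (hA.mul hD),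
    coeff_split (hB.mul hC), coeff_split (hB.mul hD)] at he
  rw [coeff_add, coeff_sub, coeff_sub, coeff_split (hA'.mul hC'), coeff_split (hA'.mul hD'),
    coeff_split (hB'.mul hC'), coeff_split (hB'.mul hD')]
  have g1 := @h1 (e.erase j)
  have g2 := @h2 (e.erase j)
  have g3 := @h3 (e.erase j)
  have g4 := @h4 (e.erase j)
  simp only [mem_support_iff] at g1 g2 g3 g4
  generalize coeff (e.erase j) (A * C) = a1 at *
  generalize coeff (e.erase j) (B * C) = a2 at *
  generalize coeff (e.erase j) (A * D) = a3 at *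
  generalize coeff (e.erase j) (B * D) = a4 at *
  generalize coeff (e.erase j) (A' * C') = b1 at *
  generalize coeff (e.erase j) (B' * C') = b2 at *
  generalize coeff (e.erase j) (A' * D') = b3 at *
  generalize coeff (e.erase j) (B' * D') = b4 at *
  generalize e j = x at *
  clear expd h1 h2 h3 h4
  by_cases c0 : x = 0
  · have q1 : ¬ x = 1 := by omega
    have q2 : ¬ x = u := by omega
    have q3 : ¬ x = u + 1 := by omega
    rw [if_pos c0, if_neg q1, if_neg q2, if_neg q3] at he ⊢
    simpa using g1 (by simpa using he)
  by_cases c1 : x = 1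
  · have q2 : ¬ x = u := by omega
    have q3 : ¬ x = u + 1 := by omega
    rw [if_neg c0, if_pos c1, if_neg q2, if_neg q3] at he ⊢
    simpa using g2 (by simpa using he)
  by_cases c2 : x = u
  · have q3 : ¬ x = u + 1 := by omega
    rw [if_neg c0, if_neg c1, if_pos c2, if_neg q3] at he ⊢
    simpa using g3 (by simpa using he)
  rw [if_neg c0, if_neg c1, if_neg c2] at he ⊢
  by_cases c3 : x = u + 1
  · rw [if_pos c3] at he ⊢
    simpa using g4 (by simpa using he)
  · rw [if_neg c3] at he
    simp at he

theorem supp_pow {A B : MvPolynomial (Fin n) (ZMod p)} (h : A.support ⊆ B.support) :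
    (A ^ p).support ⊆ (B ^ p).support := by
  rw [← expand_zmod, ← expand_zmod, support_expand _ hp.out.ne_zero,
    support_expand _ hp.out.ne_zero]
  exact Finset.image_subset_image h

theorem Z_eq (m : ℕ) (h : m < n) : Z p n m = X ⟨m, h⟩ := by simp [Z, h]

theorem E_succ_pow (m : ℕ) (i : ℤ) (r : ℕ) :
    E p n (m + 1) i ^ p ^ r = E p n m (i - 1) ^ p ^ (r + 1) - Z p n m ^ p ^ r * E p n m i ^ p ^ r := by
  rw [E_succ, sub_pow_expChar_pow, mul_pow, ← pow_mul, ← pow_succ']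

theorem lemA (a : ℕ) (ha : a ≤ n) (k s : ℤ) (hks : s ≤ k) (r : ℕ) :
    (E p n a k * E p n a (s - r) ^ p ^ r).support ⊆
      (E p n a s * E p n a (k - r) ^ p ^ r).support := by
  induction a generalizing k s r with
  | zero =>
    by_cases hr : r = 0
    · subst hr; simp [mul_comm]
    · have : E p n 0 k * E p n 0 (s - r) ^ p ^ r = 0 := by
        rw [E_zero, E_zero]
        by_cases hk : k = 0
        · rw [if_neg (c := s - r = 0) (by omega), zero_pow (pow_ne_zero _ hp.out.ne_zero), mul_zero]
        · rw [if_neg hk, zero_mul]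
      rw [this]; simp
  | succ a ih =>
    by_cases hr : r = 0
    · subst hr; simp [mul_comm]
    obtain ⟨r, rfl⟩ := Nat.exists_eq_succ_of_ne_zero hr
    have ih := ih (by omega)
    have fr : ∀ i, Free (⟨a, ha⟩ : Fin n) (E p n a i) := fun i => E_free a i _ le_rfl
    rw [E_succ_pow, E_succ_pow, E_succ a k, E_succ a s, Z_eq a ha]
    refine supp4 ((fr _).pow _) (fr _) ((fr _).pow _) (fr _) ((fr _).pow _) ((fr _).pow _)
      ((fr _).pow _) ((fr _).pow _) _ (Nat.one_lt_pow hr hp.out.one_lt) ?_ ?_ ?_ ?_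
    · have := supp_pow (ih (k - 1) (s - 1) (by omega) (r + 1))
      rw [mul_pow, mul_pow, ← pow_mul, ← pow_mul, ← pow_succ] at this
      convert! this using 5 <;> push_cast <;> ring_nf
    · have := ih k s hks (r + 2)
      convert! this using 5 <;> push_cast <;> ring_nf
    · have := supp_pow (ih (k - 1) (s - 1) (by omega) r)
      rw [mul_pow, mul_pow, ← pow_mul, ← pow_mul, ← pow_succ] at this
      convert! this using 5 <;> push_cast <;> ring_nf
    · exact ih k s hks (r + 1)

theorem lemB (a b : ℕ) (hab : a ≤ b) (hb : b ≤ n) (k s : ℤ) (hks : s ≤ k) (r : ℕ) :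
    (E p n a k * E p n b (s - r) ^ p ^ r).support ⊆
      (E p n a s * E p n b (k - r) ^ p ^ r).support := by
  induction b, hab using Nat.le_induction generalizing r with
  | base => exact lemA a hb k s hks r
  | succ b hab ih =>
    have ih := ih (by omega)
    have fr : ∀ i, Free (⟨b, hb⟩ : Fin n) (E p n b i) := fun i => E_free b i _ le_rfl
    have fra : ∀ i, Free (⟨b, hb⟩ : Fin n) (E p n a i) := fun i => E_free a i _ hab
    rw [E_succ_pow, E_succ_pow, Z_eq b hb, mul_sub, mul_sub, mul_left_comm,
      mul_left_comm (E p n a s)]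
    refine supp2 ((fra _).mul ((fr _).pow _)) ((fra _).mul ((fr _).pow _))
      ((fra _).mul ((fr _).pow _)) ((fra _).mul ((fr _).pow _)) _
      (pow_ne_zero _ hp.out.ne_zero) ?_ (ih r)
    have := ih (r + 1)
    convert! this using 5 <;> push_cast <;> ring_nf

theorem lemC (a b : ℕ) (hab : a ≤ b) (hb : b ≤ n) (k s : ℤ) (e : Fin n →₀ ℕ)
    (he : ∀ j : Fin n, a ≤ j.val → j.val < b → e j ≠ 0) :
    (E p n a s * E p n b k - E p n a k * E p n b s).coeff e = 0 := by
  induction b, hab using Nat.le_induction generalizing e with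
  | base => rw [mul_comm, sub_self, coeff_zero]
  | succ b hab ih =>
    have ih := ih (by omega)
    have fr : ∀ i, Free (⟨b, hb⟩ : Fin n) (E p n b i) := fun i => E_free b i _ le_rfl
    have fra : ∀ i, Free (⟨b, hb⟩ : Fin n) (E p n a i) := fun i => E_free a i _ hab
    have : E p n a s * E p n (b + 1) k - E p n a k * E p n (b + 1) s =
        (E p n a s * E p n b (k - 1) ^ p - E p n a k * E p n b (s - 1) ^ p) -
        X ⟨b, hb⟩ ^ 1 * (E p n a s * E p n b k - E p n a k * E p n b s) := by
      rw [E_succ, E_succ, Z_eq b hb]; ring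
    rw [this, coeff_sub, Free.coeff (((fra _).mul ((fr _).pow _)).sub ((fra _).mul ((fr _).pow _)))
      _ (he ⟨b, hb⟩ hab (Nat.lt_succ_self b)),
      coeff_split (((fra _).mul (fr _)).sub ((fra _).mul (fr _))), ih]
    · simp
    · intro j h1 h2
      rw [Finsupp.erase_ne (by rintro rfl; simp at h2)]
      exact he j h1 (by omega)

/-! Relation with the actual polynomials. -/

theorem prod_lin {A : Type*} [CommRing A] [IsDomain A] [Algebra (ZMod p) A] (y v : A) :
    ∏ c : ZMod p, (y - algebraMap (ZMod p) A c * v) = y ^ p - v ^ (p - 1) * y := by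
  have hp1 := hp.out.one_lt
  by_cases hv : v = 0
  · subst hv
    simp [ZMod.card, zero_pow (show p - 1 ≠ 0 by omega)]
  have key : (∏ c : ZMod p, (Polynomial.X - Polynomial.C c)) =
      (Polynomial.X ^ p - Polynomial.X : Polynomial (ZMod p)) := by
    have h1 := FiniteField.roots_X_pow_card_sub_X (ZMod p)
    rw [ZMod.card] at h1
    have hd := FiniteField.X_pow_card_sub_X_natDegree_eq (ZMod p) hp1
    have hm : (Polynomial.X ^ p - Polynomial.X : Polynomial (ZMod p)).Monic :=
      Polynomial.monic_X_pow_sub (by rw [Polynomial.degree_X]; exact_mod_cast hp1)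
    have := Polynomial.prod_multiset_X_sub_C_of_monic_of_roots_card_eq hm
      (by rw [h1, hd]; simp [ZMod.card])
    rw [h1] at this
    exact this
  apply IsFractionRing.injective A (FractionRing A)
  have hv' : algebraMap A (FractionRing A) v ≠ 0 := by
    simpa using hv
  set φ := algebraMap A (FractionRing A)
  have k2 := congrArg (Polynomial.eval₂ (φ.comp (algebraMap (ZMod p) A)) (φ y / φ v)) key
  rw [Polynomial.eval₂_finsetProd] at k2
  simp only [Polynomial.eval₂_sub, Polynomial.eval₂_X, Polynomial.eval₂_C, Polynomial.eval₂_pow,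
    RingHom.comp_apply] at k2
  have k3 := congrArg (fun z => φ v ^ p * z) k2
  have hc : φ v ^ p = ∏ c : ZMod p, φ v := by simp [ZMod.card]
  have e1 : φ v ^ p * ∏ c : ZMod p, (φ y / φ v - φ (algebraMap (ZMod p) A c)) =
      ∏ c : ZMod p, (φ y - φ (algebraMap (ZMod p) A c) * φ v) := by
    rw [hc, ← Finset.prod_mul_distrib]
    refine Finset.prod_congr rfl fun c _ => ?_
    field_simp
  have e2 : φ v ^ p * ((φ y / φ v) ^ p - φ y / φ v) = φ y ^ p - φ v ^ (p - 1) * φ y := by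
    obtain ⟨r, hr⟩ : ∃ r, p = r + 1 := ⟨p - 1, by omega⟩
    have : p - 1 = r := by omega
    rw [this, mul_sub, div_pow, mul_div_cancel₀ _ (pow_ne_zero _ hv')]
    congr 1
    conv_lhs => rw [hr]
    rw [pow_succ]; field_simp
  simp only [map_prod, map_sub, map_mul, map_pow]
  rw [← e1, ← e2]
  exact k3

/-- partial linear forms. -/
noncomputable def L (p n m : ℕ) (c : Fin n → ZMod p) : MvPolynomial (Fin n) (ZMod p) :=
  ∑ j ∈ Finset.univ.filter (fun j : Fin n => j.val < m), C (c j) * X j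

theorem mem_V (m : ℕ) (u : MvPolynomial (Fin n) (ZMod p)) :
    u ∈ V p n m ↔ ∃ c, L p n m c = u := by
  simp [V, L]

theorem L_congr (m : ℕ) (c c' : Fin n → ZMod p) (h : ∀ j : Fin n, j.val < m → c j = c' j) :
    L p n m c = L p n m c' := by
  unfold L
  refine Finset.sum_congr rfl fun j hj => ?_
  rw [h j (by simpa using hj)]

theorem L_succ (m : ℕ) (h : m < n) (c : Fin n → ZMod p) :
    L p n (m + 1) c = L p n m c + C (c ⟨m, h⟩) * X ⟨m, h⟩ := by
  unfold L
  have : (Finset.univ.filter (fun j : Fin n => j.val < m + 1)) =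
      insert ⟨m, h⟩ (Finset.univ.filter (fun j : Fin n => j.val < m)) := by
    ext j
    simp only [Finset.mem_filter, Finset.mem_univ, true_and, Finset.mem_insert, Fin.ext_iff]
    omega
  rw [this, Finset.sum_insert (by simp), add_comm]

theorem L_coeff (m : ℕ) (h : m < n) (c : Fin n → ZMod p) :
    (L p n m c).coeff (Finsupp.single ⟨m, h⟩ 1) = 0 := by
  unfold L
  rw [coeff_sum]
  refine Finset.sum_eq_zero fun j hj => ?_
  rw [coeff_C_mul, coeff_X, if_neg, mul_zero]
  simp only [Finset.mem_filter, Finset.mem_univ, true_and] at hj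
  intro hh
  rw [Finsupp.single_left_inj one_ne_zero] at hh
  subst hh
  simp at hj

theorem f_succ_prod (m : ℕ) (h : m < n) :
    f p n (m + 1) = ∏ c : ZMod p,
      (f p n m).comp (Polynomial.X - Polynomial.C (C c * X ⟨m, h⟩)) := by
  unfold f
  simp only [Polynomial.prod_comp, Polynomial.sub_comp, Polynomial.X_comp, Polynomial.C_comp]
  rw [← Finset.prod_product']
  symm
  refine Finset.prod_bij (fun x _ => x.2 + C x.1 * X ⟨m, h⟩) ?_ ?_ ?_ ?_
  · rintro ⟨c, u⟩ hx
    simp only [Finset.mem_product, Finset.mem_univ, true_and, mem_V] at hx ⊢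
    obtain ⟨c', rfl⟩ := hx
    refine ⟨Function.update c' ⟨m, h⟩ c, ?_⟩
    rw [L_succ m h, Function.update_self]
    congr 1
    apply L_congr
    intro j hj
    rw [Function.update_of_ne]
    rintro rfl; simp at hj
  · rintro ⟨c, u⟩ hx ⟨c', u'⟩ hx' heq
    simp only [Finset.mem_product, Finset.mem_univ, true_and, mem_V] at hx hx' heq
    obtain ⟨b, rfl⟩ := hx
    obtain ⟨b', rfl⟩ := hx'
    have h1 := congrArg (coeff (Finsupp.single (⟨m, h⟩ : Fin n) 1)) heq
    simp only [coeff_add, L_coeff, coeff_C_mul, coeff_X, if_true, mul_one, zero_add] at h1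
    subst h1
    simpa using heq
  · intro u hu
    rw [mem_V] at hu
    obtain ⟨c, rfl⟩ := hu
    refine ⟨(c ⟨m, h⟩, L p n m c), ?_, ?_⟩
    · simp only [Finset.mem_product, Finset.mem_univ, true_and, mem_V]
      exact ⟨c, rfl⟩
    · exact (L_succ m h c).symm
  · rintro ⟨c, u⟩ _
    simp only [map_add]
    ring

/-- additivity -/
def Addv (G : Polynomial (MvPolynomial (Fin n) (ZMod p))) : Prop :=
  ∀ (c : ZMod p) (a : MvPolynomial (Fin n) (ZMod p)),
    G.comp (Polynomial.X - Polynomial.C (C c * a)) = G - Polynomial.C (C c * G.eval a)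

theorem f_succ_of (m : ℕ) (h : m < n) (hf : Addv (f p n m)) :
    f p n (m + 1) = f p n m ^ p - Polynomial.C (hGen p n ⟨m, h⟩) * f p n m := by
  rw [f_succ_prod m h]
  simp only [hf _ _]
  have := prod_lin (p := p) (f p n m) (Polynomial.C ((f p n m).eval (X ⟨m, h⟩)))
  rw [hGen, Polynomial.C_pow, ← this]
  refine Finset.prod_congr rfl fun c _ => ?_
  rw [Polynomial.C_mul]
  rfl

theorem f_zero : f p n 0 = Polynomial.X := by
  have : V p n 0 = {0} := by
    ext u
    simp [mem_V, L, eq_comm]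
  simp [f, this]

theorem f_addv (m : ℕ) (h : m ≤ n) : Addv (f p n m) := by
  induction m with
  | zero => rw [f_zero]; intro c a; simp
  | succ m ih =>
    have ih := ih (by omega)
    intro c a
    rw [f_succ_of m h ih]
    simp only [Polynomial.sub_comp, Polynomial.pow_comp, Polynomial.mul_comp, Polynomial.C_comp,
      ih c a, Polynomial.eval_sub, Polynomial.eval_pow, Polynomial.eval_mul, Polynomial.eval_C]
    rw [sub_pow_expChar, ← Polynomial.C_pow, mul_pow, ← C_pow, ZMod.pow_card]
    simp only [Polynomial.C_sub, Polynomial.C_mul, Polynomial.C_pow]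
    ring

theorem F_map (m : ℕ) (h : m ≤ n) :
    (F p n m).map (aeval (R := ZMod p) (hGen p n)).toRingHom = f p n m := by
  induction m with
  | zero => rw [f_zero]; simp [F]
  | succ m ih =>
    rw [f_succ_of m h (f_addv m (by omega))]
    simp only [F, Polynomial.map_sub, Polynomial.map_pow, Polynomial.map_mul, Polynomial.map_C,
      ih (by omega), Z_eq m h]
    simp

theorem d_eq (m : ℕ) (h : m ≤ n) (i : ℕ) :
    d p n m i = aeval (hGen p n) ((-1) ^ (m - i) * E p n m i) := by
  rw [d, ← F_map m h, Polynomial.coeff_map]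
  simp [E]

theorem F_monic (m : ℕ) : (F p n m).Monic ∧ (F p n m).natDegree = p ^ m := by
  have hp1 := hp.out.one_lt
  induction m with
  | zero => exact ⟨Polynomial.monic_X, by simp [F]⟩
  | succ m ih =>
    have hd : (Polynomial.C (Z p n m) * F p n m).natDegree < (F p n m ^ p).natDegree := by
      refine (Polynomial.natDegree_C_mul_le _ _).trans_lt ?_
      rw [ih.1.natDegree_pow, ih.2]
      have : 0 < p ^ m := pow_pos hp.out.pos _
      nlinarith
    refine ⟨(ih.1.pow p).sub_of_left (Polynomial.degree_lt_degree hd), ?_⟩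
    rw [F, Polynomial.natDegree_sub_eq_left_of_natDegree_lt hd, ih.1.natDegree_pow, ih.2,
      pow_succ']

theorem algInd : AlgebraicIndependent (ZMod p) (hGen p n) := by
  let B := Algebra.adjoin (ZMod p) (Set.range (hGen p n))
  have hp1 := hp.out.one_lt
  let ψ : MvPolynomial (Fin n) (ZMod p) →ₐ[ZMod p] B :=
    aeval (fun j => ⟨hGen p n j, Algebra.subset_adjoin ⟨j, rfl⟩⟩)
  have hψ : (algebraMap B (MvPolynomial (Fin n) (ZMod p))).comp ψ.toRingHom =
      (aeval (R := ZMod p) (hGen p n)).toRingHom := by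
    have : (B.val).comp ψ = aeval (hGen p n) := by
      ext j; simp [ψ]
    exact congrArg AlgHom.toRingHom this
  have hX : ∀ j : Fin n, IsIntegral B (X j : MvPolynomial (Fin n) (ZMod p)) := by
    intro j
    let G : Polynomial (MvPolynomial (Fin n) (ZMod p)) := F p n j ^ (p - 1) - Polynomial.C (X j)
    have hG : G.Monic := by
      refine ((F_monic j.val).1.pow _).sub_of_left (Polynomial.degree_lt_degree ?_)
      rw [Polynomial.natDegree_C, (F_monic j.val).1.natDegree_pow, (F_monic j.val).2]
      exact Nat.mul_pos (by omega) (pow_pos hp.out.pos _)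
    refine ⟨G.map ψ.toRingHom, hG.map _, ?_⟩
    rw [Polynomial.eval₂_map, hψ, ← Polynomial.eval_map]
    simp only [G, Polynomial.map_sub, Polynomial.map_pow, F_map j.val j.2.le, Polynomial.map_C]
    simp [hGen]
  have h_integral : Algebra.IsIntegral B (MvPolynomial (Fin n) (ZMod p)) := by
    refine ⟨fun x => ?_⟩
    induction x using MvPolynomial.induction_on with
    | C a => exact isIntegral_algebraMap (x := algebraMap (ZMod p) B a)
    | add x y hx hy => exact hx.add hy
    | mul_X x j hx => exact hx.mul (hX j)
  have halg : Algebra.IsAlgebraic B (MvPolynomial (Fin n) (ZMod p)) := inferInstance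
  exact (Algebra.IsAlgebraic.isTranscendenceBasis_of_le_trdeg_of_finite (ZMod p) (hGen p n)
    (by simp [MvPolynomial.trdeg_of_isDomain])).1

end Dick

/-- every monomial (in the `h`'s) of `d_{k+q,k} d_{k+t,s}` is a monomial of
`d_{k+q,s} d_{k+t,k}`, and no monomial of the difference is divisible by
`h_{k+q+1} ⋯ h_{k+t}`. -/
theorem stmt12 (p n : ℕ) [Fact p.Prime] (s k q t : ℕ) (hs : s < k) (hq : q < t)
    (hkt : k + t ≤ n) (P Q : MvPolynomial (Fin n) (ZMod p))
    (hP : aeval (hGen p n) P = d p n (k + q) k * d p n (k + t) s)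
    (hQ : aeval (hGen p n) Q = d p n (k + q) s * d p n (k + t) k) :
    P.support ⊆ Q.support ∧
    ∀ e ∈ (Q - P).support, ∃ j : Fin n, k + q ≤ j.val ∧ j.val < k + t ∧ e j = 0 := by
  have inj : Function.Injective (aeval (R := ZMod p) (hGen p n)) := Dick.algInd
  rw [Dick.d_eq _ (by omega), Dick.d_eq _ (by omega), ← map_mul] at hP hQ
  have hP := inj hP
  have hQ := inj hQ
  rw [mul_mul_mul_comm, ← pow_add] at hP hQ
  rw [show k + q - k + (k + t - s) = k + q + t - s by omega] at hP
  rw [show k + q - s + (k + t - k) = k + q + t - s by omega] at hQ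
  have hB := Dick.lemB (p := p) (n := n) (k + q) (k + t) (by omega) hkt k s (by omega) 0
  simp only [pow_zero, pow_one, Nat.cast_zero, sub_zero] at hB
  have hC := fun e he => Dick.lemC (p := p) (n := n) (k + q) (k + t) (by omega) hkt k s e he
  rcases neg_one_pow_eq_or (MvPolynomial (Fin n) (ZMod p)) (k + q + t - s) with h | h
  all_goals
    rw [h] at hP hQ
    subst hP hQ
    refine ⟨by simpa using hB, fun e he => ?_⟩
    by_contra! hcon
    have := hC e hcon
    rw [mem_support_iff] at he
    apply he
    simp only [coeff_sub, one_mul, neg_one_mul, coeff_neg] at this ⊢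
    first
    | exact this
    | (rw [sub_eq_zero] at this ⊢; rw [this])
end

section
/- Let 0 ≤ j ≤ n-1. For every P ∈ MvPolynomial (Fin n) 𝔽_p with aeval(h) P = d_{n,j} (where aeval(h) substitutes h_1, …, h_n for the n variables), the exponent vector v with v_t = p^j for 1 ≤ t ≤ n-j and v_t = 0 for n-j+1 ≤ t ≤ n lies in the support of P with coefficient 1 (that is, the monomial (h_1 h_2 ⋯ h_{n-j})^{p^j} occurs in d_{n,j} with coefficient 1), and every other element of the support of P is strictly smaller than v in left-lexicographic order (comparing coordinates from t = 1 upward). -/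
open MvPolynomial

lemma prod_zmod_field (p : ℕ) [Fact p.Prime] {L : Type*} [Field L] [Algebra (ZMod p) L] (x : L) :
    ∏ c : ZMod p, (x - algebraMap (ZMod p) L c) = x ^ p - x := by
  have h1 : (∏ c : ZMod p, (Polynomial.X - Polynomial.C c)) =
      (Polynomial.X ^ p - Polynomial.X : Polynomial (ZMod p)) := by
    have hr := FiniteField.roots_X_pow_card_sub_X (ZMod p)
    rw [ZMod.card] at hr
    have hp := (Fact.out : p.Prime).one_lt
    have hd := FiniteField.X_pow_card_sub_X_natDegree_eq (ZMod p) hp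
    have hm : (Polynomial.X ^ p - Polynomial.X : Polynomial (ZMod p)).Monic :=
      Polynomial.monic_X_pow_sub (by simpa using hp)
    have := Polynomial.prod_multiset_X_sub_C_of_monic_of_roots_card_eq hm
      (by rw [hr, hd]; simp)
    rw [hr] at this
    exact this
  have := congrArg (Polynomial.aeval x) h1
  simpa [map_prod] using this

lemma prod_zmod_s15 (p : ℕ) [Fact p.Prime] {T : Type*} [CommRing T] [IsDomain T] [Algebra (ZMod p) T]
    (F G : T) :
    ∏ c : ZMod p, (F - algebraMap (ZMod p) T c * G) = F ^ p - G ^ (p - 1) * F := by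
  have hp := (Fact.out : p.Prime).one_lt
  by_cases hG : G = 0
  · have : p - 1 ≠ 0 := by omega
    simp [hG, this]
  · apply IsFractionRing.injective T (FractionRing T)
    have hG' : algebraMap T (FractionRing T) G ≠ 0 := by simpa using hG
    have h := prod_zmod_field p
      (algebraMap T (FractionRing T) F / algebraMap T (FractionRing T) G)
    have h2 := congrArg (fun z => (algebraMap T (FractionRing T) G) ^ p * z) h
    have hpp : p = (p - 1) + 1 := by omega
    have e1 : (algebraMap T (FractionRing T) G) ^ p =
        ∏ c : ZMod p, (algebraMap T (FractionRing T) G) := by simp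
    simp only [map_prod, map_sub, map_mul, map_pow, ← IsScalarTower.algebraMap_apply]
    calc _ = (algebraMap T (FractionRing T) G) ^ p *
          ((algebraMap T (FractionRing T) F / algebraMap T (FractionRing T) G) ^ p -
            algebraMap T (FractionRing T) F / algebraMap T (FractionRing T) G) := by
            rw [e1, ← h, ← Finset.prod_mul_distrib]
            refine Finset.prod_congr rfl fun c _ => ?_
            field_simp
      _ = _ := by
            rw [mul_sub, div_pow, mul_div_cancel₀ _ (pow_ne_zero _ hG')]
            have e2 : (algebraMap T (FractionRing T) G) ^ p =
                algebraMap T (FractionRing T) G ^ (p - 1) * algebraMap T (FractionRing T) G := by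
              rw [← pow_succ, ← hpp]
            rw [e2]
            field_simp

lemma coeff_V {p n k : ℕ} [Fact p.Prime] (hk : k < n) {u : MvPolynomial (Fin n) (ZMod p)}
    (hu : u ∈ V p n k) : coeff (Finsupp.single (⟨k, hk⟩ : Fin n) 1) u = 0 := by
  classical
  simp only [V, Finset.mem_image] at hu
  obtain ⟨c, -, rfl⟩ := hu
  rw [coeff_sum]
  refine Finset.sum_eq_zero fun i hi => ?_
  simp only [Finset.mem_filter] at hi
  rw [coeff_C_mul, coeff_X, if_neg, mul_zero]
  intro h
  have := Finsupp.single_left_injective one_ne_zero h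
  rw [this] at hi
  simp at hi

lemma sum_succ {p n k : ℕ} [Fact p.Prime] (hk : k < n) (c : Fin n → ZMod p) :
    (∑ j ∈ Finset.univ.filter (fun j : Fin n => j.val < k + 1),
      (C (c j) * X j : MvPolynomial (Fin n) (ZMod p))) =
    (∑ j ∈ Finset.univ.filter (fun j : Fin n => j.val < k), C (c j) * X j)
      + C (c ⟨k, hk⟩) * X ⟨k, hk⟩ := by
  classical
  have : Finset.univ.filter (fun j : Fin n => j.val < k + 1) =
      insert ⟨k, hk⟩ (Finset.univ.filter (fun j : Fin n => j.val < k)) := by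
    ext i
    simp [Fin.ext_iff]
    omega
  rw [this, Finset.sum_insert (by simp), add_comm]

lemma prod_V_succ {p n k : ℕ} [Fact p.Prime] (hk : k < n) {M : Type*} [CommMonoid M]
    (g : MvPolynomial (Fin n) (ZMod p) → M) :
    ∏ u ∈ V p n (k + 1), g u =
      ∏ c : ZMod p, ∏ u ∈ V p n k, g (u + C c * X ⟨k, hk⟩) := by
  classical
  rw [← Finset.prod_product' (Finset.univ : Finset (ZMod p)) (V p n k)
    (fun c u => g (u + C c * X (⟨k, hk⟩ : Fin n)))]
  symm
  refine Finset.prod_bij (fun a _ => a.2 + C a.1 * X ⟨k, hk⟩) ?_ ?_ ?_ ?_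
  · rintro ⟨c, u⟩ h
    simp only [Finset.mem_product, V, Finset.mem_image] at h
    obtain ⟨-, c', -, rfl⟩ := h
    refine Finset.mem_image.2 ⟨Function.update c' ⟨k, hk⟩ c, Finset.mem_univ _, ?_⟩
    rw [sum_succ hk]
    simp only [Function.update_self]
    congr 1
    refine Finset.sum_congr rfl fun i hi => ?_
    rw [Function.update_of_ne]
    rintro rfl
    simp at hi
  · rintro ⟨c, u⟩ h ⟨c', u'⟩ h' he
    simp only [Finset.mem_product] at h h'
    have h1 := congrArg (coeff (Finsupp.single (⟨k, hk⟩ : Fin n) 1)) he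
    simp only [coeff_add, coeff_V hk h.2, coeff_V hk h'.2, coeff_C_mul, coeff_X, if_true,
      mul_one, zero_add] at h1
    subst h1
    simpa using he
  · intro b hb
    simp only [V, Finset.mem_image] at hb
    obtain ⟨c, -, rfl⟩ := hb
    refine ⟨(c ⟨k, hk⟩, _), ?_, (sum_succ hk c).symm⟩
    simp only [Finset.mem_product, Finset.mem_univ, true_and]
    exact Finset.mem_image.2 ⟨c, Finset.mem_univ _, rfl⟩
  · intros; rfl

lemma f_zero (p n : ℕ) [Fact p.Prime] : f p n 0 = Polynomial.X := by
  have : V p n 0 = {0} := by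
    ext x
    simp [V, eq_comm]
  simp [f, this]

/-- additivity -/
def Addi (p n k : ℕ) [Fact p.Prime] : Prop :=
  ∀ (a : MvPolynomial (Fin n) (ZMod p)) (c : ZMod p),
    (f p n k).comp (Polynomial.X - Polynomial.C (C c * a)) =
      f p n k - Polynomial.C (C c * (f p n k).eval a)

lemma f_succ_of {p n k : ℕ} [Fact p.Prime] (hk : k < n) (h : Addi p n k) :
    f p n (k + 1) = f p n k ^ p - Polynomial.C (hGen p n ⟨k, hk⟩) * f p n k := by
  have : f p n (k + 1) = ∏ c : ZMod p, (f p n k - algebraMap (ZMod p) _ c *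
      Polynomial.C ((f p n k).eval (X ⟨k, hk⟩))) := by
    conv_lhs => rw [f]
    rw [prod_V_succ hk]
    refine Finset.prod_congr rfl fun c _ => ?_
    have := h (X ⟨k, hk⟩) c
    have e : algebraMap (ZMod p) (Polynomial (MvPolynomial (Fin n) (ZMod p))) c =
      Polynomial.C (C c) := rfl
    rw [e, ← Polynomial.C_mul, ← this]
    conv_rhs => rw [f]
    rw [Polynomial.prod_comp]
    refine Finset.prod_congr rfl fun u _ => ?_
    simp
    ring
  rw [this, prod_zmod_s15, hGen, ← Polynomial.C_pow]

lemma addi (p n k : ℕ) [Fact p.Prime] (hk : k ≤ n) : Addi p n k := by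
  induction k with
  | zero => intro a c; simp [f_zero]
  | succ k ih =>
    have h := ih (by omega)
    intro a c
    have hc : (C c : MvPolynomial (Fin n) (ZMod p)) ^ p = C c := by
      rw [← C_pow, ZMod.pow_card]
    rw [f_succ_of hk h]
    simp only [Polynomial.sub_comp, Polynomial.pow_comp, Polynomial.mul_comp, Polynomial.C_comp,
      h a c, Polynomial.eval_sub, Polynomial.eval_pow, Polynomial.eval_mul, Polynomial.eval_C]
    rw [sub_pow_char, ← Polynomial.C_pow, mul_pow, hc]
    simp only [map_mul, map_sub, map_pow]
    ring

lemma f_succ {p n k : ℕ} [Fact p.Prime] (hk : k < n) :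
    f p n (k + 1) = f p n k ^ p - Polynomial.C (hGen p n ⟨k, hk⟩) * f p n k :=
  f_succ_of hk (addi p n k hk.le)

lemma f_lifts {p n : ℕ} [Fact p.Prime] (k : ℕ) (hk : k ≤ n) :
    f p n k ∈ Polynomial.lifts
      (algebraMap (Algebra.adjoin (ZMod p) (Set.range (hGen p n))) _) := by
  induction k with
  | zero => rw [f_zero]; exact Polynomial.X_mem_lifts _
  | succ k ih =>
    have e : f p n (k + 1) = f p n k ^ p + Polynomial.C (-hGen p n ⟨k, hk⟩) * f p n k := by
      rw [f_succ hk, Polynomial.C_neg]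
      ring
    rw [e]
    refine add_mem (pow_mem (ih (by omega)) _) (mul_mem ?_ (ih (by omega)))
    have hmem : -hGen p n ⟨k, hk⟩ ∈ Algebra.adjoin (ZMod p) (Set.range (hGen p n)) :=
      neg_mem (Algebra.subset_adjoin ⟨_, rfl⟩)
    exact (Polynomial.mem_lifts _).2 ⟨Polynomial.C ⟨_, hmem⟩, Polynomial.map_C _⟩

lemma X_mem_V {p n : ℕ} [Fact p.Prime] (i : Fin n) : X i ∈ V p n n := by
  classical
  refine Finset.mem_image.2 ⟨Pi.single i 1, Finset.mem_univ _, ?_⟩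
  rw [Finset.sum_eq_single i]
  · simp
  · intro j _ hj; simp [hj]
  · simp

lemma hGen_inj (p n : ℕ) [Fact p.Prime] : Function.Injective
    (aeval (hGen p n) : MvPolynomial (Fin n) (ZMod p) →ₐ[ZMod p] _) := by
  have hm : (f p n n).Monic := Polynomial.monic_prod_of_monic _ _ fun u _ => Polynomial.monic_X_sub_C u
  have hX : ∀ i : Fin n, IsIntegral (Algebra.adjoin (ZMod p) (Set.range (hGen p n)))
      (X i : MvPolynomial (Fin n) (ZMod p)) := by
    intro i
    obtain ⟨q, hq, -, hqm⟩ := Polynomial.lifts_and_degree_eq_and_monic (f_lifts n le_rfl) hm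
    refine ⟨q, hqm, ?_⟩
    rw [Polynomial.eval₂_eq_eval_map, hq, f, Polynomial.eval_prod]
    exact Finset.prod_eq_zero (X_mem_V i) (by simp)
  have hint : Algebra.IsIntegral (Algebra.adjoin (ZMod p) (Set.range (hGen p n)))
      (MvPolynomial (Fin n) (ZMod p)) := by
    refine ⟨fun x => ?_⟩
    induction x using MvPolynomial.induction_on with
    | C a => exact isIntegral_algebraMap (x := algebraMap (ZMod p) (Algebra.adjoin (ZMod p) (Set.range (hGen p n))) a)
    | add a b ha hb => exact ha.add hb
    | mul_X a i ha => exact ha.mul (hX i)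
  have : Algebra.IsAlgebraic (Algebra.adjoin (ZMod p) (Set.range (hGen p n)))
      (MvPolynomial (Fin n) (ZMod p)) := inferInstance
  have := Algebra.IsAlgebraic.isTranscendenceBasis_of_le_trdeg_of_finite (ZMod p) (hGen p n)
    (by rw [MvPolynomial.trdeg_of_isDomain]; simp)
  exact this.1

/-- the expansion of the Dickson invariants in the Borel generators -/
noncomputable def Qp (p n : ℕ) [Fact p.Prime] : ℕ → ℕ → MvPolynomial (Fin n) (ZMod p)
  | 0, 0 => 1
  | 0, _ + 1 => 0
  | k + 1, 0 => (if h : k < n then X ⟨k, h⟩ else 0) * Qp p n k 0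
  | k + 1, i + 1 => Qp p n k i ^ p + (if h : k < n then X ⟨k, h⟩ else 0) * Qp p n k (i + 1)

lemma Qp_spec {p n : ℕ} [Fact p.Prime] (k : ℕ) (hk : k ≤ n) (i : ℕ) :
    (f p n k).coeff (p ^ i) = aeval (hGen p n) ((-1) ^ (k + i) * Qp p n k i) := by
  have hp := (Fact.out : p.Prime)
  induction k generalizing i with
  | zero =>
    cases i with
    | zero => simp [f_zero, Qp]
    | succ i =>
      have : 1 ≠ p ^ (i + 1) := (Nat.one_lt_pow (by omega) hp.one_lt).ne
      simp [f_zero, Qp, Polynomial.coeff_X, this]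
  | succ k ih =>
    have hk' : k < n := hk
    rw [f_succ hk', Polynomial.coeff_sub, Polynomial.coeff_C_mul, ih hk'.le,
      ← Polynomial.map_frobenius_expand, Polynomial.coeff_map, Polynomial.coeff_expand hp.pos]
    cases i with
    | zero =>
      have : ¬ p ∣ 1 := hp.one_lt.ne' ∘ Nat.dvd_one.1
      simp [this, Qp, hk', pow_succ]
      ring
    | succ i =>
      rw [if_pos (dvd_pow_self p (by omega)), pow_succ, Nat.mul_div_cancel _ hp.pos, ih hk'.le,
        frobenius_def]
      have h1 : ((-1 : MvPolynomial (Fin n) (ZMod p)) ^ (k + i)) ^ p = (-1) ^ (k + i) := by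
        rw [← pow_mul, mul_comm, pow_mul]
        congr 1
        have := sub_pow_char (p := p) (0 : MvPolynomial (Fin n) (ZMod p)) 1
        simpa [hp.ne_zero] using this
      simp only [Qp, dif_pos hk']
      rw [← map_pow, mul_pow, h1]
      simp only [map_mul, map_add, map_pow, aeval_X, map_neg, map_one]
      ring

/-- lex smaller -/
def LexLt {n : ℕ} (e v : Fin n →₀ ℕ) : Prop :=
  ∃ t0 : Fin n, (∀ t : Fin n, t < t0 → e t = v t) ∧ e t0 < v t0

/-- leading monomial -/
def Good {p n : ℕ} (v : Fin n →₀ ℕ) (P : MvPolynomial (Fin n) (ZMod p)) : Prop :=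
  ∃ R, P = monomial v 1 + R ∧ ∀ e ∈ R.support, LexLt e v

lemma LexLt.irrefl {n : ℕ} (v : Fin n →₀ ℕ) : ¬ LexLt v v := fun ⟨_, _, h⟩ => lt_irrefl _ h

lemma Good.final {p n : ℕ} [Fact p.Prime] {v : Fin n →₀ ℕ} {P : MvPolynomial (Fin n) (ZMod p)}
    (h : Good v P) : coeff v P = 1 ∧ ∀ e ∈ P.support, e ≠ v → LexLt e v := by
  classical
  obtain ⟨R, rfl, hR⟩ := h
  constructor
  · have : coeff v R = 0 := by
      by_contra h
      exact LexLt.irrefl v (hR v (mem_support_iff.2 h))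
    simp [this]
  · intro e he hne
    refine hR e ?_
    rw [mem_support_iff] at he ⊢
    simpa [coeff_monomial, hne.symm] using he

lemma Good.pow {p n : ℕ} [Fact p.Prime] {v : Fin n →₀ ℕ} {P : MvPolynomial (Fin n) (ZMod p)}
    (h : Good v P) : Good (p • v) (P ^ p) := by
  classical
  have hp := (Fact.out : p.Prime)
  obtain ⟨R, rfl, hR⟩ := h
  refine ⟨R ^ p, by rw [add_pow_char, monomial_pow, one_pow], ?_⟩
  rw [← expand_zmod, support_expand R hp.ne_zero]
  intro e he
  obtain ⟨e', he', rfl⟩ := Finset.mem_image.1 he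
  obtain ⟨t, h1, h2⟩ := hR e' he'
  refine ⟨t, fun s hs => by simp [h1 s hs], ?_⟩
  simpa using Nat.mul_lt_mul_of_pos_left h2 hp.pos

lemma Good.add {p n : ℕ} [Fact p.Prime] {v : Fin n →₀ ℕ} {P R : MvPolynomial (Fin n) (ZMod p)}
    (h : Good v P) (hR : ∀ e ∈ R.support, LexLt e v) : Good v (P + R) := by
  classical
  obtain ⟨R', rfl, hR'⟩ := h
  refine ⟨R' + R, by ring, fun e he => ?_⟩
  rcases Finset.mem_union.1 (support_add he) with h | h
  exacts [hR' e h, hR e h]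

/-- the leading exponent -/
noncomputable def lv (p n k j : ℕ) : Fin n →₀ ℕ :=
  Finsupp.equivFunOnFinite.symm (fun t : Fin n => if t.val < k - j then p ^ j else 0)

lemma lv_apply (p n k j : ℕ) (t : Fin n) : lv p n k j t = if t.val < k - j then p ^ j else 0 := rfl

lemma Qp_zero_of_lt {p n : ℕ} [Fact p.Prime] (k i : ℕ) (h : k < i) : Qp p n k i = 0 := by
  have hp := (Fact.out : p.Prime)
  induction k generalizing i with
  | zero => cases i with
    | zero => omega
    | succ i => rfl
  | succ k ih => cases i with
    | zero => omega
    | succ i =>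
      rw [Qp, ih i (by omega), ih (i + 1) (by omega)]
      simp [hp.ne_zero]

lemma add_single_apply_lt {n k : ℕ} (hk : k < n) (e : Fin n →₀ ℕ) (s : Fin n) (hs : s.val < k) :
    (addRightEmbedding (Finsupp.single (⟨k, hk⟩ : Fin n) 1)) e s = e s := by
  have : (⟨k, hk⟩ : Fin n) ≠ s := by
    rintro rfl
    simp at hs
  simp [this]

lemma Qp_good {p n : ℕ} [Fact p.Prime] (k : ℕ) (hk : k ≤ n) (i : ℕ) (hi : i ≤ k) :
    Good (lv p n k i) (Qp p n k i) := by
  classical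
  have hp := (Fact.out : p.Prime)
  induction k generalizing i with
  | zero =>
    obtain rfl : i = 0 := by omega
    have : lv p n 0 0 = 0 := by ext t; simp [lv_apply]
    exact ⟨0, by rw [this]; simp [Qp], by simp⟩
  | succ k ih =>
    have hk' : k < n := hk
    cases i with
    | zero =>
      obtain ⟨R, h1, h2⟩ := ih hk'.le 0 (by omega)
      refine ⟨X ⟨k, hk'⟩ * R, ?_, ?_⟩
      · rw [Qp, dif_pos hk', h1, mul_add, X, monomial_mul, one_mul]
        have e0 : Finsupp.single (⟨k, hk'⟩ : Fin n) 1 + lv p n k 0 = lv p n (k + 1) 0 := by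
          ext t
          simp only [Finsupp.add_apply, lv_apply, Finsupp.single_apply, Fin.ext_iff, pow_zero,
            Nat.sub_zero]
          split_ifs <;> omega
        rw [e0]
      · intro e he
        rw [mul_comm, support_mul_X, Finset.mem_map] at he
        obtain ⟨e', he', rfl⟩ := he
        obtain ⟨t, h3, h4⟩ := h2 e' he'
        have ht : t.val < k := by
          rw [lv_apply] at h4
          split_ifs at h4 with h
          · omega
          · omega
        refine ⟨t, fun s hs => ?_, ?_⟩
        · have := h3 s hs
          have hs' : s.val < t.val := hs
          rw [add_single_apply_lt hk' e' s (by omega), this, lv_apply, lv_apply,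
            if_pos (by omega), if_pos (by omega)]
        · rw [lv_apply, if_pos (by omega)] at h4
          rw [add_single_apply_lt hk' e' t (by omega), lv_apply, if_pos (by omega)]
          exact h4
    | succ i =>
      have hg := (ih hk'.le i (by omega)).pow
      have e1 : p • lv p n k i = lv p n (k + 1) (i + 1) := by
        ext t
        simp only [Finsupp.smul_apply, lv_apply, Nat.add_sub_add_right]
        split_ifs <;> simp [pow_succ, mul_comm]
      rw [e1] at hg
      rw [Qp, dif_pos hk']
      refine hg.add ?_
      by_cases hik : i + 1 ≤ k
      swap
      · rw [Qp_zero_of_lt k (i + 1) (by omega)]; simp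
      obtain hgood := (ih hk'.le (i + 1) hik).final
      intro e he
      rw [mul_comm, support_mul_X, Finset.mem_map] at he
      obtain ⟨e', he', rfl⟩ := he
      have hpos : 0 < p ^ (i + 1) := pow_pos hp.pos _
      by_cases hee : e' = lv p n k (i + 1)
      · subst hee
        refine ⟨⟨k - (i + 1), by omega⟩, fun s hs => ?_, ?_⟩
        · have hs' : s.val < k - (i + 1) := hs
          rw [add_single_apply_lt hk' _ s (by omega), lv_apply, lv_apply,
            if_pos (by omega), if_pos (by omega)]
        · rw [add_single_apply_lt hk' _ _ (by simp only; omega), lv_apply, lv_apply,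
            if_neg (by simp only; omega), if_pos (by simp only; omega)]
          exact hpos
      · obtain ⟨t, h3, h4⟩ := hgood.2 e' he' hee
        have ht : t.val < k - (i + 1) := by
          rw [lv_apply] at h4
          split_ifs at h4 with h
          · omega
          · omega
        refine ⟨t, fun s hs => ?_, ?_⟩
        · have := h3 s hs
          have hs' : s.val < t.val := hs
          rw [add_single_apply_lt hk' e' s (by omega), this, lv_apply, lv_apply,
            if_pos (by omega), if_pos (by omega)]
        · rw [lv_apply, if_pos (by omega)] at h4
          rw [add_single_apply_lt hk' e' t (by omega), lv_apply, if_pos (by omega)]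
          exact h4

/-- the monomial `(h_1 ⋯ h_{n-j})^{p^j}` occurs in `d_{n,j}` with coefficient
`1` and is the left-lexicographically largest monomial of `d_{n,j}`. -/
theorem stmt15 (p n : ℕ) [Fact p.Prime] (j : ℕ) (hj : j ≤ n - 1) (hn : 1 ≤ n)
    (P : MvPolynomial (Fin n) (ZMod p)) (hP : aeval (hGen p n) P = d p n n j) :
    MvPolynomial.coeff
      (Finsupp.equivFunOnFinite.symm
        (fun t : Fin n => if t.val < n - j then p ^ j else 0)) P = 1 ∧
    ∀ e ∈ P.support,
      e ≠ Finsupp.equivFunOnFinite.symm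
            (fun t : Fin n => if t.val < n - j then p ^ j else 0) →
      ∃ t0 : Fin n,
        (∀ t : Fin n, t < t0 →
          e t = (if t.val < n - j then p ^ j else 0)) ∧
        e t0 < (if t0.val < n - j then p ^ j else 0) := by
  have hPQ : P = Qp p n n j := by
    apply hGen_inj p n
    rw [hP, d, Qp_spec n le_rfl, map_mul, map_pow, map_neg, map_one, ← mul_assoc, ← pow_add]
    have : Even (n - j + (n + j)) := ⟨n, by omega⟩
    rw [this.neg_one_pow, one_mul]
  have hg := (Qp_good (p := p) n le_rfl j (by omega)).final
  rw [← hPQ] at hg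
  exact hg
end
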